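/- There exists a constant C > 0 such that for all integers n ≥ A ≥ 2, every tree of size n with a distinguished root has a straight-line upward planar grid drawing of some width W ≤ C·(A + log₂ n) and height H ≤ C·(n/√A)·(log₂ A)², with the root placed at the top-left corner (1, H) of the bounding box. -/

import Mathlib

/-!
Write `a` for the width parameter, `B` for `⌊√a⌋` and `L` for `⌊log₂ a⌋ + 1`. Every rooted tree of
size `n ≥ a` gets a drawing of width `520 a + log₂ n` and height `O(n L² / B)`.

The basic construction is the star step (`star`, `starStep`) at a root `v`. The subtrees at the
children of `v` of size at most `B` are drawn compactly (`small`, width `m` and height `log₂ m` for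
size `m`) and mapped linearly into disjoint cones with apex `v`. A cone spanned by integer vectors
`p`, `q` holds the image of the `m × m` grid under `(x, y) ↦ x p + y q`, so a subtree of size `m`
needs a cone whose spanning vectors have length `O(a / m)`. Such cones come from rational slopes with
small denominators: there are `Ω(X²)` fractions of denominator at most `X` in each unit interval
(`sum_totient_ge`), so the range of slopes needed for all small subtrees together is
`O(L + B ∑ m / a²)` (`fan_raw`). If `∑ m` is too small to pay for the resulting depth, shorter
vectors with a wider range of slopes are used and reflected in the diagonal, so that the fan becomes
shallow and wide (`fan`). All other subtrees are stacked below, each with its root in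
the column next to `v`, except the lowest one, the heaviest, whose root is right below `v`. The
medium ones, of size between `B` and `a`, cost `O(L)` rows each and so `O(L / B)` per vertex. The
big ones are drawn recursively; the heavy one keeps the width, and any other loses one column, which
is affordable because its size is at most half as large.

The only loss is the additive `O(L² B)` of a star step, which has to be charged to `a` vertices. So
the heavy path of `v` is followed until `a` vertices have been passed (`exists_cut`), the star step
is applied at the vertex reached, and the at most `a` vertices passed before are drawn on top of it
in `O(L² B)` rows (`group`, `prepend`). In the induction (`main`), a big light child pays for itself
since the height bound is proportional to `2 n - a`, which loses an `a` for every summand.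

Planarity is handled through half-open edges, which contain the child and not the parent: a drawing
is planar as soon as these are pairwise disjoint (`isStraightLineDrawing`), and drawings of subtrees in
disjoint convex regions can be combined by a single gluing lemma (`glue`).
-/

/-- A straight-line planar drawing of a graph `G`: an injective map of vertices to points of
`ℝ²` such that no vertex lies in the interior of (or on) a non-incident edge segment, and any
two distinct edge segments intersect exactly in the images of their common endpoints. -/
def IsStraightLineDrawing {V : Type} (G : SimpleGraph V) (f : V → ℝ × ℝ) : Prop :=
  Function.Injective f ∧
  (∀ u v w : V, G.Adj u v → w ≠ u → w ≠ v → f w ∉ segment ℝ (f u) (f v)) ∧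
  (∀ u v u' v' : V, G.Adj u v → G.Adj u' v' → s(u, v) ≠ s(u', v') →
    segment ℝ (f u) (f v) ∩ segment ℝ (f u') (f v') =
      f '' {w | (w = u ∨ w = v) ∧ (w = u' ∨ w = v')})

/-- A grid drawing of width `W` and height `H`: a straight-line planar drawing with all
vertices on integer grid points of `{1, …, W} × {1, …, H}`. -/
def IsGridDrawing {V : Type} (G : SimpleGraph V) (f : V → ℝ × ℝ) (W H : ℕ) : Prop :=
  IsStraightLineDrawing G f ∧
  ∀ x : V, ∃ i j : ℤ, 1 ≤ i ∧ i ≤ (W : ℤ) ∧ 1 ≤ j ∧ j ≤ (H : ℤ) ∧ f x = ((i : ℝ), (j : ℝ))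

/-- In a tree with distinguished root `r`, `u` is the parent of `v` iff `u` is a neighbor of
`v` lying on the path from `v` to `r` (equivalently, one step closer to the root). -/
def IsParent {V : Type} (G : SimpleGraph V) (r u v : V) : Prop :=
  G.Adj u v ∧ G.dist r u + 1 = G.dist r v

/-- A drawing is upward (w.r.t. root `r`) if every parent is drawn at a `y`-coordinate
greater than or equal to that of each of its children. -/
def IsUpward {V : Type} (G : SimpleGraph V) (r : V) (f : V → ℝ × ℝ) : Prop :=
  ∀ u v : V, IsParent G r u v → (f v).2 ≤ (f u).2

namespace TreeDraw

/-! ### Rooted trees as parent maps -/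

/-- A rooted tree on a vertex type `V`, encoded by its parent map. The root is its own parent, and
`dep` is any function that decreases along the parent map (so every vertex reaches the root). -/
structure RTree (V : Type) where
  par : V → V
  root : V
  dep : V → ℕ
  par_root : par root = root
  dep_lt : ∀ v, v ≠ root → dep (par v) < dep v

namespace RTree
set_option linter.unusedSectionVars false
variable {V : Type} [Fintype V] (T : RTree V)

open Classical in
/-- The set of descendants of `v`, including `v` itself. -/
noncomputable def D (v : V) : Finset V := {u | ∃ k : ℕ, T.par^[k] u = v}

open Classical in
/-- The set of children of `v`. -/
noncomputable def ch (v : V) : Finset V := {c | c ≠ T.root ∧ T.par c = v}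

/-- The size of the subtree rooted at `v`. -/
noncomputable def sz (v : V) : ℕ := (T.D v).card

lemma mem_D {v u : V} : u ∈ T.D v ↔ ∃ k : ℕ, T.par^[k] u = v := by simp [D]

lemma mem_ch {v c : V} : c ∈ T.ch v ↔ c ≠ T.root ∧ T.par c = v := by simp [ch]

lemma self_mem (v : V) : v ∈ T.D v := T.mem_D.2 ⟨0, rfl⟩

lemma sz_pos (v : V) : 0 < T.sz v := Finset.card_pos.2 ⟨v, T.self_mem v⟩

lemma D_trans {a b c : V} (h1 : a ∈ T.D b) (h2 : b ∈ T.D c) : a ∈ T.D c := by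
  obtain ⟨k, hk⟩ := T.mem_D.1 h1
  obtain ⟨l, hl⟩ := T.mem_D.1 h2
  exact T.mem_D.2 ⟨l + k, by rw [Function.iterate_add_apply, hk, hl]⟩

lemma par_iter_root (k : ℕ) : T.par^[k] T.root = T.root :=
  Function.iterate_fixed T.par_root k

lemma dep_par_le (u : V) : T.dep (T.par u) ≤ T.dep u := by
  by_cases h : u = T.root
  · rw [h, T.par_root]
  · exact (T.dep_lt u h).le

lemma dep_iter_le (k : ℕ) (u : V) : T.dep (T.par^[k] u) ≤ T.dep u := by
  induction k generalizing u with
  | zero => simp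
  | succ k ih => rw [Function.iterate_succ_apply]; exact (ih _).trans (T.dep_par_le u)

lemma mem_D_of_par {u v : V} (h : T.par u ∈ T.D v) : u ∈ T.D v := by
  obtain ⟨k, hk⟩ := T.mem_D.1 h
  exact T.mem_D.2 ⟨k + 1, hk⟩

lemma par_mem_D {u v : V} (h : u ∈ T.D v) (hne : u ≠ v) : T.par u ∈ T.D v ∧ u ≠ T.root := by
  obtain ⟨k, hk⟩ := T.mem_D.1 h
  refine ⟨?_, ?_⟩
  · cases k with
    | zero => exact absurd hk hne
    | succ k => exact T.mem_D.2 ⟨k, hk⟩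
  · rintro rfl
    rw [T.par_iter_root] at hk
    exact hne hk

lemma dep_lt_of_mem {u v : V} (h : u ∈ T.D v) (hne : u ≠ v) : T.dep v < T.dep u := by
  obtain ⟨h1, h2⟩ := T.par_mem_D h hne
  obtain ⟨k, hk⟩ := T.mem_D.1 h1
  have := T.dep_iter_le k (T.par u)
  rw [hk] at this
  exact this.trans_lt (T.dep_lt u h2)

lemma D_antisymm {u v : V} (h1 : u ∈ T.D v) (h2 : v ∈ T.D u) : u = v := by
  by_contra hne
  have a := T.dep_lt_of_mem h1 hne
  have b := T.dep_lt_of_mem h2 (Ne.symm hne)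
  omega

lemma D_comparable {u a b : V} (ha : u ∈ T.D a) (hb : u ∈ T.D b) : a ∈ T.D b ∨ b ∈ T.D a := by
  obtain ⟨k, hk⟩ := T.mem_D.1 ha
  obtain ⟨l, hl⟩ := T.mem_D.1 hb
  rcases le_total k l with h | h
  · left
    refine T.mem_D.2 ⟨l - k, ?_⟩
    rw [← hk, ← Function.iterate_add_apply, Nat.sub_add_cancel h, hl]
  · right
    refine T.mem_D.2 ⟨k - l, ?_⟩
    rw [← hl, ← Function.iterate_add_apply, Nat.sub_add_cancel h, hk]

lemma ch_mem_D {v c : V} (h : c ∈ T.ch v) : c ∈ T.D v := by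
  refine T.mem_D_of_par ?_
  rw [(T.mem_ch.1 h).2]
  exact T.self_mem v

lemma ch_ne {v c : V} (h : c ∈ T.ch v) : c ≠ v := by
  rintro rfl
  have := T.dep_lt c (T.mem_ch.1 h).1
  rw [(T.mem_ch.1 h).2] at this
  omega

/-! ### Subtrees hanging off a skeleton -/

section skeleton
variable (v : V) (P : Set V)

/-- The roots of the subtrees hanging off a vertex set `P`. -/
def Hang (c : V) : Prop := c ≠ T.root ∧ c ∉ P ∧ T.par c ∈ P

variable {v P}

lemma subset_D (hP : ∀ q ∈ P, q ≠ v → T.par q ∈ P ∧ q ≠ T.root) {q : V} (hq : q ∈ P) :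
    q ∈ T.D v := by
  induction hn : T.dep q using Nat.strong_induction_on generalizing q with
  | _ n ih =>
    by_cases h : q = v
    · rw [h]; exact T.self_mem v
    · obtain ⟨h1, h2⟩ := hP q hq h
      exact T.mem_D_of_par (ih _ (hn ▸ T.dep_lt q h2) h1 rfl)

lemma exists_hang (hv : v ∈ P) {u : V} (hu : u ∈ T.D v) (huP : u ∉ P) :
    ∃ c, T.Hang P c ∧ u ∈ T.D c := by
  induction hn : T.dep u using Nat.strong_induction_on generalizing u with
  | _ n ih =>
    have hne : u ≠ v := fun h => huP (h ▸ hv)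
    obtain ⟨h1, h2⟩ := T.par_mem_D hu hne
    by_cases h : T.par u ∈ P
    · exact ⟨u, ⟨h2, huP, h⟩, T.self_mem u⟩
    · obtain ⟨c, hc, hc'⟩ := ih _ (hn ▸ T.dep_lt u h2) h1 h rfl
      exact ⟨c, hc, T.mem_D_of_par hc'⟩

lemma not_mem_P_of_hang (hv : v ∈ P) (hP : ∀ q ∈ P, q ≠ v → T.par q ∈ P ∧ q ≠ T.root)
    {c u : V} (hc : T.Hang P c) (hu : u ∈ T.D c) : u ∉ P := by
  induction hn : T.dep u using Nat.strong_induction_on generalizing u with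
  | _ n ih =>
    intro huP
    by_cases h : u = c
    · exact hc.2.1 (h ▸ huP)
    · obtain ⟨h1, h2⟩ := T.par_mem_D hu h
      refine ih _ (hn ▸ T.dep_lt u h2) h1 rfl ?_
      by_cases huv : u = v
      · exfalso
        subst huv
        have h3 := T.subset_D hP hc.2.2
        have h4 := T.mem_D_of_par h3
        exact h (T.D_antisymm hu h4)
      · exact (hP u huP huv).1

lemma hang_unique (hv : v ∈ P) (hP : ∀ q ∈ P, q ≠ v → T.par q ∈ P ∧ q ≠ T.root)
    {c d u : V} (hc : T.Hang P c) (hd : T.Hang P d) (h1 : u ∈ T.D c) (h2 : u ∈ T.D d) : c = d := by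
  have key : ∀ {c d : V}, T.Hang P c → T.Hang P d → c ∈ T.D d → c = d := by
    intro c d hc hd h
    by_contra hne
    exact T.not_mem_P_of_hang hv hP hd (T.par_mem_D h hne).1 hc.2.2
  rcases T.D_comparable h1 h2 with h | h
  · exact key hc hd h
  · exact (key hd hc h).symm

lemma hang_mem_D (hP : ∀ q ∈ P, q ≠ v → T.par q ∈ P ∧ q ≠ T.root) {c : V} (hc : T.Hang P c) :
    c ∈ T.D v := T.mem_D_of_par (T.subset_D hP hc.2.2)

end skeleton

lemma hang_single {v c : V} : T.Hang {v} c ↔ c ∈ T.ch v := by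
  rw [mem_ch]
  constructor
  · rintro ⟨h1, _, h3⟩
    exact ⟨h1, h3⟩
  · rintro ⟨h1, h2⟩
    exact ⟨h1, T.ch_ne (T.mem_ch.2 ⟨h1, h2⟩), h2⟩

lemma disjoint_ch {v c d u : V} (hc : c ∈ T.ch v) (hd : d ∈ T.ch v)
    (h1 : u ∈ T.D c) (h2 : u ∈ T.D d) : c = d :=
  T.hang_unique (v := v) (P := {v}) rfl (fun _ hq hne => absurd hq hne)
    (T.hang_single.2 hc) (T.hang_single.2 hd) h1 h2

lemma sz_eq (v : V) : T.sz v = 1 + ∑ c ∈ T.ch v, T.sz c := by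
  classical
  have : T.D v = insert v ((T.ch v).biUnion T.D) := by
    ext u
    simp only [Finset.mem_insert, Finset.mem_biUnion]
    constructor
    · intro h
      by_cases huv : u = v
      · exact Or.inl huv
      · obtain ⟨c, hc, hu⟩ := T.exists_hang (v := v) (P := {v}) rfl h huv
        exact Or.inr ⟨c, T.hang_single.1 hc, hu⟩
    · rintro (rfl | ⟨c, hc, hu⟩)
      · exact T.self_mem u
      · exact T.D_trans hu (T.ch_mem_D hc)
  unfold sz
  rw [this, Finset.card_insert_of_notMem, Finset.card_biUnion, add_comm]
  · intro c hc d hd hne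
    rw [Function.onFun, Finset.disjoint_left]
    intro u h1 h2
    exact hne (T.disjoint_ch hc hd h1 h2)
  · simp only [Finset.mem_biUnion, not_exists, not_and]
    intro c hc h
    exact T.ch_ne hc (T.D_antisymm (T.ch_mem_D hc) h)

lemma sz_ch_lt {v c : V} (h : c ∈ T.ch v) : T.sz c < T.sz v := by
  rw [T.sz_eq v]
  have := Finset.single_le_sum (f := T.sz) (fun _ _ => Nat.zero_le _) h
  omega

end RTree

/-! ### Half-open edges and planar drawings -/

/-- The segment from a parent position `a` to a child position `b`, without the end `a`. A drawing
of a rooted tree is planar iff these half-open segments are pairwise disjoint, the root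
contributing the degenerate one `A b b = {b}`. -/
def A (a b : ℝ × ℝ) : Set (ℝ × ℝ) :=
  {z | ∃ t : ℝ, 0 ≤ t ∧ t < 1 ∧ z.1 = b.1 + t * (a.1 - b.1) ∧ z.2 = b.2 + t * (a.2 - b.2)}

lemma right_mem_A (a b : ℝ × ℝ) : b ∈ A a b := ⟨0, by norm_num⟩

lemma A_self (b : ℝ × ℝ) : A b b = {b} := by
  ext z
  simp only [A, Set.mem_ofPred_eq, Set.mem_singleton_iff]
  constructor
  · rintro ⟨t, _, _, h1, h2⟩
    ext <;> linarith
  · rintro rfl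
    exact ⟨0, by norm_num⟩

lemma A_subset {R : Set (ℝ × ℝ)} (hR : Convex ℝ R) {a b : ℝ × ℝ} (ha : a ∈ R) (hb : b ∈ R) :
    A a b ⊆ R := by
  rintro z ⟨t, h0, h1, hz1, hz2⟩
  have := hR hb ha (sub_nonneg.2 h1.le) h0 (by ring)
  convert this using 1
  ext
  · simp; linarith
  · simp; linarith

namespace RTree
set_option linter.unusedSectionVars false
variable {V : Type} [Fintype V] (T : RTree V)

open Classical in
/-- The starting point of the edge entering `u`, in the subtree rooted at `v`; by convention it is
`v` itself for `u = v`. -/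
noncomputable def src (v u : V) : V := if u = v then v else T.par u

lemma src_self (v : V) : T.src v v = v := by simp [src]
lemma src_ne {v u : V} (h : u ≠ v) : T.src v u = T.par u := by simp [src, h]

/-- The half-open edge entering `u` in the drawing `f` of the subtree rooted at `v`. -/
noncomputable def arc (v : V) (f : V → ℝ × ℝ) (u : V) : Set (ℝ × ℝ) := A (f (T.src v u)) (f u)

/-- A planar upward drawing of the subtree at `v` with integer coordinates; here the second
coordinate points downwards. -/
structure Dr (v : V) (f : V → ℝ × ℝ) : Prop where
  planar : ∀ u ∈ T.D v, ∀ u' ∈ T.D v, u ≠ u' → Disjoint (T.arc v f u) (T.arc v f u')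
  int : ∀ u ∈ T.D v, ∃ i j : ℤ, f u = ((i : ℝ), (j : ℝ))
  up : ∀ u ∈ T.D v, u ≠ v → (f (T.par u)).2 ≤ (f u).2

lemma exists_piecewise {v : V} {P : Set V} (hv : v ∈ P)
    (hP : ∀ q ∈ P, q ≠ v → T.par q ∈ P ∧ q ≠ T.root) (g : V → ℝ × ℝ) (f : V → V → ℝ × ℝ) :
    ∃ F : V → ℝ × ℝ, (∀ q ∈ P, F q = g q) ∧ ∀ c, T.Hang P c → ∀ u ∈ T.D c, F u = f c u := by
  classical
  refine ⟨fun u => if h : ∃ c, T.Hang P c ∧ u ∈ T.D c then f h.choose u else g u, ?_, ?_⟩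
  · intro q hq
    have : ¬ ∃ c, T.Hang P c ∧ q ∈ T.D c := by
      rintro ⟨c, hc, hqc⟩
      exact T.not_mem_P_of_hang hv hP hc hqc hq
    simp [this]
  · intro c hc u hu
    have h : ∃ c, T.Hang P c ∧ u ∈ T.D c := ⟨c, hc, hu⟩
    have : h.choose = c := T.hang_unique hv hP h.choose_spec.1 hc h.choose_spec.2 hu
    simp only [h, dif_pos]
    rw [this]

/-! ### Gluing drawings of subtrees along a skeleton -/

/-- The gluing principle: a skeleton `P` containing `v` is drawn by `g`, each hanging subtree `c` is
drawn by `f c` inside a convex region `R c`; the regions are pairwise disjoint, and the skeleton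
edges (including those entering the hanging roots) are disjoint and touch `R c` only at the
position of `c`. -/
theorem glue {v : V} {P : Set V} (hv : v ∈ P)
    (hP : ∀ q ∈ P, q ≠ v → T.par q ∈ P ∧ q ≠ T.root) (g : V → ℝ × ℝ) (f : V → V → ℝ × ℝ)
    (R : V → Set (ℝ × ℝ))
    (hconv : ∀ c, T.Hang P c → Convex ℝ (R c))
    (hmem : ∀ c, T.Hang P c → ∀ u ∈ T.D c, f c u ∈ R c)
    (hDr : ∀ c, T.Hang P c → T.Dr c (f c))
    (hgf : ∀ c, T.Hang P c → f c c = g c)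
    (hR : ∀ c, T.Hang P c → ∀ d, T.Hang P d → c ≠ d → Disjoint (R c) (R d))
    (hsk : ∀ q, (q ∈ P ∨ T.Hang P q) → ∀ q', (q' ∈ P ∨ T.Hang P q') → q ≠ q' →
      Disjoint (T.arc v g q) (T.arc v g q'))
    (hskR : ∀ q, (q ∈ P ∨ T.Hang P q) → ∀ c, T.Hang P c → ∀ z ∈ T.arc v g q, z ∈ R c →
      q = c ∧ z = g c)
    (hint : ∀ q ∈ P, ∃ i j : ℤ, g q = ((i : ℝ), (j : ℝ)))
    (hup : ∀ q, (q ∈ P ∨ T.Hang P q) → q ≠ v → (g (T.par q)).2 ≤ (g q).2) :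
    ∃ F : V → ℝ × ℝ, T.Dr v F ∧ (∀ q ∈ P, F q = g q) ∧
      ∀ c, T.Hang P c → ∀ u ∈ T.D c, F u = f c u := by
  classical
  obtain ⟨F, hF1, hF2⟩ := T.exists_piecewise hv hP g f
  refine ⟨F, ?_, hF1, hF2⟩
  have hG : ∀ q, (q ∈ P ∨ T.Hang P q) → F q = g q := by
    rintro q (h | h)
    · exact hF1 q h
    · rw [hF2 q h q (T.self_mem q), hgf q h]
  -- `c` is hanging, hence different from `v`
  have hcv : ∀ c, T.Hang P c → c ≠ v := fun c hc h => hc.2.1 (h ▸ hv)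
  have hsrc : ∀ q, (q ∈ P ∨ T.Hang P q) → T.src v q ∈ P := by
    intro q hq
    by_cases h : q = v
    · subst h; rw [T.src_self]; exact hv
    · rw [T.src_ne h]
      rcases hq with hq | hq
      · exact (hP q hq h).1
      · exact hq.2.2
  have harc : ∀ q, (q ∈ P ∨ T.Hang P q) → T.arc v F q = T.arc v g q := by
    intro q hq
    unfold arc
    rw [hG q hq, hG _ (Or.inl (hsrc q hq))]
  have hinner : ∀ c, T.Hang P c → ∀ u ∈ T.D c, u ≠ c → u ≠ v ∧ T.par u ∈ T.D c := by
    intro c hc u hu hne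
    refine ⟨?_, (T.par_mem_D hu hne).1⟩
    rintro rfl
    exact T.not_mem_P_of_hang hv hP hc hu hv
  have harc2 : ∀ c, T.Hang P c → ∀ u ∈ T.D c, u ≠ c →
      T.arc v F u = T.arc c (f c) u ∧ T.arc v F u ⊆ R c := by
    intro c hc u hu hne
    obtain ⟨h1, h2⟩ := hinner c hc u hu hne
    have : T.arc v F u = T.arc c (f c) u := by
      unfold arc
      rw [T.src_ne h1, T.src_ne hne, hF2 c hc u hu, hF2 c hc _ h2]
    refine ⟨this, this ▸ ?_⟩
    unfold arc
    rw [T.src_ne hne]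
    exact A_subset (hconv c hc) (hmem c hc _ h2) (hmem c hc u hu)
  have hcase : ∀ u ∈ T.D v, (u ∈ P ∨ T.Hang P u) ∨ ∃ c, T.Hang P c ∧ u ∈ T.D c ∧ u ≠ c := by
    intro u hu
    by_cases huP : u ∈ P
    · exact Or.inl (Or.inl huP)
    · obtain ⟨c, hc, huc⟩ := T.exists_hang hv hu huP
      by_cases h : u = c
      · exact Or.inl (Or.inr (h ▸ hc))
      · exact Or.inr ⟨c, hc, huc, h⟩
  have hmixed : ∀ q, (q ∈ P ∨ T.Hang P q) → ∀ c, T.Hang P c → ∀ u ∈ T.D c, u ≠ c →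
      Disjoint (T.arc v F q) (T.arc v F u) := by
    intro q hq c hc u hu hne
    obtain ⟨h1, h2⟩ := harc2 c hc u hu hne
    rw [Set.disjoint_left]
    intro z hz hz'
    rw [harc q hq] at hz
    obtain ⟨rfl, rfl⟩ := hskR q hq c hc z hz (h2 hz')
    have := (hDr q hc).planar q (T.self_mem q) u hu (Ne.symm hne)
    rw [h1] at hz'
    refine Set.disjoint_left.1 this ?_ hz'
    unfold arc
    rw [hgf q hc]
    exact right_mem_A _ _
  refine ⟨?_, ?_, ?_⟩
  · intro u hu u' hu' hne
    rcases hcase u hu with h | ⟨c, hc, huc, hucn⟩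
    · rcases hcase u' hu' with h' | ⟨c', hc', huc', hucn'⟩
      · rw [harc u h, harc u' h']
        exact hsk u h u' h' hne
      · exact hmixed u h c' hc' u' huc' hucn'
    · rcases hcase u' hu' with h' | ⟨c', hc', huc', hucn'⟩
      · exact (hmixed u' h' c hc u huc hucn).symm
      · by_cases hcc : c = c'
        · subst hcc
          rw [(harc2 c hc u huc hucn).1, (harc2 c hc u' huc' hucn').1]
          exact (hDr c hc).planar u huc u' huc' hne
        · exact (hR c hc c' hc' hcc).mono (harc2 c hc u huc hucn).2 (harc2 c' hc' u' huc' hucn').2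
  · intro u hu
    rcases hcase u hu with (h | h) | ⟨c, hc, huc, hucn⟩
    · rw [hF1 u h]; exact hint u h
    · rw [hF2 u h u (T.self_mem u)]; exact (hDr u h).int u (T.self_mem u)
    · rw [hF2 c hc u huc]; exact (hDr c hc).int u huc
  · intro u hu hne
    rcases hcase u hu with h | ⟨c, hc, huc, hucn⟩
    · have h2 := hsrc u h
      rw [T.src_ne hne] at h2
      rw [hG u h, hF1 _ h2]
      exact hup u h hne
    · rw [hF2 c hc u huc, hF2 c hc _ (hinner c hc u huc hucn).2]
      exact (hDr c hc).up u huc hucn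

/-- The gluing principle for the skeleton `{v}` placed at the origin. -/
theorem glue_star (v : V) (g : V → ℝ × ℝ) (f : V → V → ℝ × ℝ) (R : V → Set (ℝ × ℝ))
    (hconv : ∀ c ∈ T.ch v, Convex ℝ (R c))
    (hmem : ∀ c ∈ T.ch v, ∀ u ∈ T.D c, f c u ∈ R c)
    (hDr : ∀ c ∈ T.ch v, T.Dr c (f c))
    (hgf : ∀ c ∈ T.ch v, f c c = g c)
    (hR : ∀ c ∈ T.ch v, ∀ d ∈ T.ch v, c ≠ d → Disjoint (R c) (R d))
    (hg0 : ∀ c ∈ T.ch v, g c ≠ 0) (hR0 : ∀ c ∈ T.ch v, (0 : ℝ × ℝ) ∉ R c)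
    (hsk : ∀ c ∈ T.ch v, ∀ d ∈ T.ch v, c ≠ d → Disjoint (A 0 (g c)) (A 0 (g d)))
    (hskR : ∀ c ∈ T.ch v, ∀ d ∈ T.ch v, ∀ z ∈ A 0 (g c), z ∈ R d → c = d ∧ z = g d)
    (hup : ∀ c ∈ T.ch v, 0 ≤ (g c).2) :
    ∃ F : V → ℝ × ℝ, T.Dr v F ∧ F v = 0 ∧ ∀ c ∈ T.ch v, ∀ u ∈ T.D c, F u = f c u := by
  classical
  set G : V → ℝ × ℝ := Function.update g v 0 with hGdef
  have hGv : G v = 0 := by simp [hGdef]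
  have hGc : ∀ c ∈ T.ch v, G c = g c := fun c hc => by simp [hGdef, T.ch_ne hc]
  have harcv : T.arc v G v = {0} := by
    unfold arc; rw [T.src_self, A_self, hGv]
  have harcc : ∀ c ∈ T.ch v, T.arc v G c = A 0 (g c) := by
    intro c hc
    unfold arc; rw [T.src_ne (T.ch_ne hc), hGc c hc, (T.mem_ch.1 hc).2, hGv]
  have h0A : ∀ c ∈ T.ch v, (0 : ℝ × ℝ) ∉ A 0 (g c) := by
    rintro c hc ⟨t, h0, h1, hz1, hz2⟩
    apply hg0 c hc
    simp only [Prod.fst_zero, Prod.snd_zero, zero_sub] at hz1 hz2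
    have e1 : (1 - t) * (g c).1 = 0 := by linarith
    have e2 : (1 - t) * (g c).2 = 0 := by linarith
    have : (1 - t) ≠ 0 := by linarith
    ext
    · simpa [this] using e1
    · simpa [this] using e2
  have hh : ∀ c, T.Hang {v} c ↔ c ∈ T.ch v := fun c => T.hang_single
  have key : ∃ F : V → ℝ × ℝ, T.Dr v F ∧ (∀ q ∈ ({v} : Set V), F q = G q) ∧
      ∀ c, T.Hang {v} c → ∀ u ∈ T.D c, F u = f c u := by
    refine T.glue (v := v) (P := {v}) rfl (fun _ hq hne => absurd hq hne) G f R
      (fun c hc => hconv c ((hh c).1 hc)) (fun c hc => hmem c ((hh c).1 hc))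
      (fun c hc => hDr c ((hh c).1 hc))
      (fun c hc => by rw [hGc c ((hh c).1 hc)]; exact hgf c ((hh c).1 hc))
      (fun c hc d hd => hR c ((hh c).1 hc) d ((hh d).1 hd)) ?_ ?_ ?_ ?_
    · intro q hq q' hq' hne
      rw [hh] at hq hq'
      rcases hq with rfl | hq
      · rcases hq' with rfl | hq'
        · exact absurd rfl hne
        · rw [harcv, harcc q' hq', Set.disjoint_singleton_left]
          exact h0A q' hq'
      · rcases hq' with rfl | hq'
        · rw [harcv, harcc q hq, Set.disjoint_singleton_right]
          exact h0A q hq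
        · rw [harcc q hq, harcc q' hq']
          exact hsk q hq q' hq' hne
    · intro q hq c hc z hz hzR
      rw [hh] at hq hc
      rcases hq with rfl | hq
      · rw [harcv] at hz
        rw [Set.mem_singleton_iff.1 hz] at hzR
        exact absurd hzR (hR0 c hc)
      · rw [harcc q hq] at hz
        rw [hGc c hc]
        exact hskR q hq c hc z hz hzR
    · rintro q rfl
      exact ⟨0, 0, by rw [hGv]; ext <;> simp⟩
    · intro q hq hne
      rw [hh] at hq
      rcases hq with hq | hq
      · exact absurd hq hne
      · rw [(T.mem_ch.1 hq).2, hGv, hGc q hq]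
        exact hup q hq
  obtain ⟨F, h1, h2, h3⟩ := key
  refine ⟨F, h1, ?_, fun c hc => h3 c ((hh c).2 hc)⟩
  rw [h2 v rfl, hGv]

/-- Integer affine images of drawings are drawings, provided that heights stay monotone. -/
lemma Dr.affine {T : RTree V} {v : V} {f : V → ℝ × ℝ} (h : T.Dr v f) (b p q : ℤ × ℤ)
    (hdet : p.1 * q.2 - p.2 * q.1 ≠ 0)
    (hup : ∀ u ∈ T.D v, u ≠ v →
      (f (T.par u)).1 * p.2 + (f (T.par u)).2 * q.2 ≤ (f u).1 * p.2 + (f u).2 * q.2) :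
    T.Dr v (fun u => ((b.1 : ℝ) + (f u).1 * p.1 + (f u).2 * q.1,
      (b.2 : ℝ) + (f u).1 * p.2 + (f u).2 * q.2)) := by
  have hd : (p.1 : ℝ) * q.2 - p.2 * q.1 ≠ 0 := by exact_mod_cast hdet
  refine ⟨?_, ?_, ?_⟩
  · intro u hu u' hu' hne
    have := h.planar u hu u' hu' hne
    rw [Set.disjoint_left] at this ⊢
    rintro z ⟨t, ht0, ht1, e1, e2⟩ ⟨s, hs0, hs1, e3, e4⟩
    simp only at e1 e2 e3 e4
    set a := f (T.src v u)
    set c := f u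
    set a' := f (T.src v u')
    set c' := f u'
    apply @this (c.1 + t * (a.1 - c.1), c.2 + t * (a.2 - c.2))
    · exact ⟨t, ht0, ht1, rfl, rfl⟩
    · have k1 : (c.1 + t * (a.1 - c.1) - (c'.1 + s * (a'.1 - c'.1))) * p.1 +
          (c.2 + t * (a.2 - c.2) - (c'.2 + s * (a'.2 - c'.2))) * q.1 = 0 := by linarith
      have k2 : (c.1 + t * (a.1 - c.1) - (c'.1 + s * (a'.1 - c'.1))) * p.2 +
          (c.2 + t * (a.2 - c.2) - (c'.2 + s * (a'.2 - c'.2))) * q.2 = 0 := by linarith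
      refine ⟨s, hs0, hs1, ?_, ?_⟩
      · have : (c.1 + t * (a.1 - c.1) - (c'.1 + s * (a'.1 - c'.1))) *
            ((p.1 : ℝ) * q.2 - p.2 * q.1) = 0 := by linear_combination (q.2 : ℝ) * k1 - q.1 * k2
        rcases mul_eq_zero.1 this with h | h
        · simp only; linarith
        · exact absurd h hd
      · have : (c.2 + t * (a.2 - c.2) - (c'.2 + s * (a'.2 - c'.2))) *
            ((p.1 : ℝ) * q.2 - p.2 * q.1) = 0 := by linear_combination (p.1 : ℝ) * k2 - p.2 * k1
        rcases mul_eq_zero.1 this with h | h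
        · simp only; linarith
        · exact absurd h hd
  · intro u hu
    obtain ⟨i, j, e⟩ := h.int u hu
    refine ⟨b.1 + i * p.1 + j * q.1, b.2 + i * p.2 + j * q.2, ?_⟩
    simp only [e]
    push_cast
    rfl
  · intro u hu hne
    have := hup u hu hne
    simp only
    linarith

lemma Dr.translate {T : RTree V} {v : V} {f : V → ℝ × ℝ} (h : T.Dr v f) (a b : ℤ) :
    T.Dr v (fun u => ((a : ℝ) + (f u).1, (b : ℝ) + (f u).2)) := by
  have := h.affine (a, b) (1, 0) (0, 1) (by norm_num) (by
    intro u hu hne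
    simpa using h.up u hu hne)
  simpa using this

/-- The subtree at `v` has a drawing in `[0, W] × [0, H]` with `v` at the origin. -/
def HasD (v : V) (W H : ℕ) : Prop :=
  ∃ f : V → ℝ × ℝ, T.Dr v f ∧ f v = 0 ∧
    ∀ u ∈ T.D v, 0 ≤ (f u).1 ∧ (f u).1 ≤ W ∧ 0 ≤ (f u).2 ∧ (f u).2 ≤ H

/-- As `HasD`, with both coordinates monotone along root-to-leaf paths. -/
def HasM (v : V) (W H : ℕ) : Prop :=
  ∃ f : V → ℝ × ℝ, T.Dr v f ∧ f v = 0 ∧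
    (∀ u ∈ T.D v, 0 ≤ (f u).1 ∧ (f u).1 ≤ W ∧ 0 ≤ (f u).2 ∧ (f u).2 ≤ H) ∧
    ∀ u ∈ T.D v, u ≠ v → (f (T.par u)).1 ≤ (f u).1

lemma HasM.hasD {T : RTree V} {v : V} {W H : ℕ} (h : T.HasM v W H) : T.HasD v W H := by
  obtain ⟨f, h1, h2, h3, _⟩ := h
  exact ⟨f, h1, h2, h3⟩

lemma HasD.mono {T : RTree V} {v : V} {W H W' H' : ℕ} (h : T.HasD v W H) (hW : W ≤ W')
    (hH : H ≤ H') : T.HasD v W' H' := by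
  obtain ⟨f, h1, h2, h3⟩ := h
  refine ⟨f, h1, h2, fun u hu => ?_⟩
  obtain ⟨a, b, c, d⟩ := h3 u hu
  exact ⟨a, b.trans (by exact_mod_cast hW), c, d.trans (by exact_mod_cast hH)⟩

end RTree

/-! ### Boxes and packings -/

lemma mem_A_zero {b z : ℝ × ℝ} (h : z ∈ A 0 b) :
    ∃ s : ℝ, 0 < s ∧ s ≤ 1 ∧ z.1 = s * b.1 ∧ z.2 = s * b.2 := by
  obtain ⟨t, h0, h1, e1, e2⟩ := h
  simp only [Prod.fst_zero, Prod.snd_zero, zero_sub] at e1 e2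
  exact ⟨1 - t, by linarith, by linarith, by linarith, by linarith⟩

/-- The closed box `[x0, x1] × [y0, y1]`. -/
def Box (x0 x1 y0 y1 : ℝ) : Set (ℝ × ℝ) := {z | x0 ≤ z.1 ∧ z.1 ≤ x1 ∧ y0 ≤ z.2 ∧ z.2 ≤ y1}

lemma convex_Box (x0 x1 y0 y1 : ℝ) : Convex ℝ (Box x0 x1 y0 y1) := by
  have : Box x0 x1 y0 y1 = Set.Icc x0 x1 ×ˢ Set.Icc y0 y1 := by
    ext z
    simp only [Box, Set.mem_ofPred_eq, Set.mem_prod, Set.mem_Icc]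
    tauto
  rw [this]
  exact (convex_Icc _ _).prod (convex_Icc _ _)

/-- Intervals of prescribed lengths can be packed consecutively, in the order of a given key. -/
lemma exists_packing {ι : Type} (s : Finset ι) (key m : ι → ℕ) :
    ∃ o : ι → ℕ, (∀ c ∈ s, o c + m c ≤ ∑ d ∈ s, m d) ∧ ∀ c ∈ s, ∀ d ∈ s, c ≠ d →
      (o c + m c ≤ o d ∧ key c ≤ key d) ∨ (o d + m d ≤ o c ∧ key d ≤ key c) := by
  classical
  induction s using Finset.induction_on_max_value key with
  | empty => exact ⟨fun _ => 0, by simp, by simp⟩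
  | insert a s ha hmax ih =>
    obtain ⟨o, h1, h2⟩ := ih
    refine ⟨fun c => if c = a then ∑ d ∈ s, m d else o c, ?_, ?_⟩
    · intro c hc
      rw [Finset.sum_insert ha]
      rcases Finset.mem_insert.1 hc with rfl | hc
      · simp; omega
      · have : c ≠ a := fun h => ha (h ▸ hc)
        have := h1 c hc
        simp only [*, if_false]
        omega
    · intro c hc d hd hne
      rcases Finset.mem_insert.1 hc with rfl | hc
      · rcases Finset.mem_insert.1 hd with rfl | hd
        · exact absurd rfl hne
        · right
          simp only [if_true, Ne.symm hne, if_false]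
          exact ⟨h1 d hd, hmax d hd⟩
      · have hca : c ≠ a := fun h => ha (h ▸ hc)
        rcases Finset.mem_insert.1 hd with rfl | hd
        · left
          simp only [if_true, hne, if_false]
          exact ⟨h1 c ‹c ∈ s›, hmax c ‹c ∈ s›⟩
        · have hda : d ≠ a := fun h => ha (h ▸ hd)
          simp only [hca, hda, if_false]
          exact h2 c hc d hd hne

namespace RTree
set_option linter.unusedSectionVars false
variable {V : Type} [Fintype V] (T : RTree V)

/-! ### Heavy children and the drawing of small trees -/

open Classical in
/-- A heavy child of `v`: a child with a largest subtree (and `v` itself if `v` is a leaf). -/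
noncomputable def hv (v : V) : V :=
  if h : (T.ch v).Nonempty then (Finset.exists_max_image (T.ch v) T.sz h).choose else v

lemma hv_mem {v : V} (h : (T.ch v).Nonempty) : T.hv v ∈ T.ch v := by
  rw [hv, dif_pos h]
  exact (Finset.exists_max_image (T.ch v) T.sz h).choose_spec.1

lemma hv_max {v c : V} (hc : c ∈ T.ch v) : T.sz c ≤ T.sz (T.hv v) := by
  have h : (T.ch v).Nonempty := ⟨c, hc⟩
  rw [hv, dif_pos h]
  exact (Finset.exists_max_image (T.ch v) T.sz h).choose_spec.2 c hc

lemma light_le {v c : V} (hc : c ∈ T.ch v) (hne : c ≠ T.hv v) : 2 * T.sz c < T.sz v := by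
  classical
  have h1 := T.hv_mem ⟨c, hc⟩
  have h2 := T.hv_max hc
  have h3 := T.sz_eq v
  have h4 : T.sz c + T.sz (T.hv v) ≤ ∑ c ∈ T.ch v, T.sz c := by
    rw [← Finset.sum_pair hne]
    apply Finset.sum_le_sum_of_subset
    intro x hx
    simp only [Finset.mem_insert, Finset.mem_singleton] at hx
    rcases hx with rfl | rfl <;> assumption
  omega

/-- Width `|T|`, height `log |T|`: the heavy child goes to the right of its parent, in the same row,
past the light subtrees, which stand side by side one row below. -/
theorem small (v : V) : T.HasM v (T.sz v - 1) (Nat.log 2 (T.sz v)) := by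
  classical
  induction hn : T.sz v using Nat.strong_induction_on generalizing v with
  | _ n ih =>
  have ih' : ∀ c ∈ T.ch v, T.HasM c (T.sz c - 1) (Nat.log 2 (T.sz c)) :=
    fun c hc => ih _ (hn ▸ T.sz_ch_lt hc) c rfl
  choose! f0 hf1 hf2 hf3 hf4 using ih'
  set h := T.hv v with hh
  obtain ⟨o, ho1, ho2⟩ := exists_packing ((T.ch v).erase h) (fun _ => 0) T.sz
  set l : ℕ := 1 + ∑ c ∈ (T.ch v).erase h, T.sz c with hl
  have hsum : h ∈ T.ch v → T.sz h + l = n := by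
    intro hm
    rw [← hn, T.sz_eq v, hl, ← Finset.sum_erase_add _ _ hm]
    omega
  have hln : l ≤ n := by
    rw [← hn, T.sz_eq v, hl]
    gcongr
    exact Finset.erase_subset _ _
  have hsz : ∀ c, 1 ≤ T.sz c := fun c => T.sz_pos c
  -- horizontal and vertical offsets of the subtree at `c`
  set X : V → ℕ := fun c => if c = h then l else o c with hX
  set Y : V → ℕ := fun c => if c = h then 0 else 1 with hY
  set g : V → ℝ × ℝ := fun c => ((X c : ℝ), (Y c : ℝ)) with hg
  have hXh : X h = l := by simp [hX]
  have hYh : Y h = 0 := by simp [hY]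
  have hXc : ∀ c, c ≠ h → X c = o c := fun c hc => by simp [hX, hc]
  have hYc : ∀ c, c ≠ h → Y c = 1 := fun c hc => by simp [hY, hc]
  have hlight : ∀ c ∈ T.ch v, c ≠ h → X c + T.sz c < l := by
    intro c hc hne
    have := ho1 c (Finset.mem_erase.2 ⟨hne, hc⟩)
    rw [hXc c hne]
    omega
  have hsep : ∀ c ∈ T.ch v, ∀ d ∈ T.ch v, c ≠ d →
      X c + T.sz c ≤ X d ∨ X d + T.sz d ≤ X c := by
    intro c hc d hd hne
    by_cases h1 : c = h
    · subst h1
      have := hlight d hd (Ne.symm hne)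
      omega
    · by_cases h2 : d = h
      · subst h2
        have := hlight c hc hne
        omega
      · rw [hXc c h1, hXc d h2]
        rcases ho2 c (Finset.mem_erase.2 ⟨h1, hc⟩) d (Finset.mem_erase.2 ⟨h2, hd⟩) hne with h | h
        · exact Or.inl h.1
        · exact Or.inr h.1
  have hW : ∀ c ∈ T.ch v, X c + (T.sz c - 1) ≤ n - 1 := by
    intro c hc
    have := hsz c
    by_cases h1 : c = h
    · subst h1
      have := hsum hc
      omega
    · have := hlight c hc h1
      omega
  have hH : ∀ c ∈ T.ch v, Y c + Nat.log 2 (T.sz c) ≤ Nat.log 2 n := by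
    intro c hc
    by_cases h1 : c = h
    · subst h1
      rw [hYh, zero_add]
      exact Nat.log_mono_right (hn ▸ (T.sz_ch_lt hc).le)
    · rw [hYc c h1, add_comm, ← Nat.log_mul_base (by norm_num : 1 < 2) (T.sz_pos c).ne']
      apply Nat.log_mono_right
      have := T.light_le hc h1
      omega
  have hgpos : ∀ c ∈ T.ch v, g c ≠ 0 := by
    intro c hc h0
    by_cases h1 : c = h
    · have : (g c).1 = 0 := by rw [h0]; rfl
      simp only [hg, h1, hXh] at this
      have : l = 0 := by exact_mod_cast this
      omega
    · have : (g c).2 = 0 := by rw [h0]; rfl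
      simp [hg, hYc c h1] at this
  -- every box meets the edges from `v` only in its corner
  have hskR : ∀ c ∈ T.ch v, ∀ d ∈ T.ch v, ∀ z ∈ A 0 (g c),
      ((X d : ℝ) ≤ z.1 ∧ z.1 ≤ X d + (T.sz d - 1 : ℕ) ∧ (Y d : ℝ) ≤ z.2) → c = d ∧ z = g d := by
    intro c hc d hd z hz hzR
    obtain ⟨s, hs0, hs1, e1, e2⟩ := mem_A_zero hz
    simp only [hg] at e1 e2
    obtain ⟨r1, r2, r3⟩ := hzR
    have key : s = 1 → c = d ∧ z = g d := by
      rintro rfl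
      rw [one_mul] at e1 e2
      have : c = d := by
        by_contra hne
        have := hsz d
        have := hsz c
        rw [e1] at r1 r2
        norm_cast at r1 r2
        rcases hsep c hc d hd hne with h' | h' <;> omega
      subst this
      exact ⟨rfl, Prod.ext e1 e2⟩
    by_cases h1 : c = h
    · subst h1
      rw [hYh] at e2
      rw [hXh] at e1
      by_cases h2 : d = T.hv v
      · apply key
        rw [h2, hXh] at r1
        have : (0 : ℝ) < l := by rw [hl]; positivity
        nlinarith
      · rw [hYc d h2] at r3
        norm_num at r3 e2
        linarith
    · rw [hYc c h1] at e2
      by_cases h2 : d = h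
      · subst h2
        rw [hXh] at r1
        have := hlight c hc h1
        have h3 : (X c : ℝ) + T.sz c < l := by exact_mod_cast this
        have h4 : (0 : ℝ) ≤ X c := by positivity
        have h5 : (0 : ℝ) ≤ T.sz c := by positivity
        nlinarith
      · rw [hYc d h2] at r3
        apply key
        norm_num at r3 e2
        linarith
  obtain ⟨F, F1, F2, F3⟩ := T.glue_star v g
    (fun c u => (((X c : ℤ) : ℝ) + (f0 c u).1, ((Y c : ℤ) : ℝ) + (f0 c u).2))
    (fun c => Box (X c) (X c + (T.sz c - 1 : ℕ)) (Y c) (Y c + Nat.log 2 (T.sz c)))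
    (fun c _ => convex_Box _ _ _ _)
    (by
      intro c hc u hu
      obtain ⟨a1, a2, a3, a4⟩ := hf3 c hc u hu
      simp only [Box, Set.mem_ofPred_eq, Int.cast_natCast]
      refine ⟨?_, ?_, ?_, ?_⟩ <;> linarith)
    (fun c hc => (hf1 c hc).translate _ _)
    (fun c hc => by simp [hf2 c hc, hg])
    (by
      intro c hc d hd hne
      rw [Set.disjoint_left]
      rintro z ⟨a1, a2, a3, a4⟩ ⟨b1, b2, b3, b4⟩
      have i1 := hsz c
      have i2 := hsz d
      rcases hsep c hc d hd hne with h' | h'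
      · have : X c + (T.sz c - 1) < X d := by omega
        have : (X c : ℝ) + (T.sz c - 1 : ℕ) < X d := by exact_mod_cast this
        linarith
      · have : X d + (T.sz d - 1) < X c := by omega
        have : (X d : ℝ) + (T.sz d - 1 : ℕ) < X c := by exact_mod_cast this
        linarith)
    hgpos
    (by
      rintro c hc ⟨a1, a2, a3, a4⟩
      apply hgpos c hc
      simp only [Prod.fst_zero, Prod.snd_zero] at a1 a3
      have b1 : (0 : ℝ) ≤ X c := by positivity
      have b2 : (0 : ℝ) ≤ Y c := by positivity
      ext
      · simp only [hg, Prod.fst_zero]; linarith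
      · simp only [hg, Prod.snd_zero]; linarith)
    (by
      intro c hc d hd hne
      rw [Set.disjoint_left]
      intro z hz hz'
      obtain ⟨s, hs0, hs1, e1, e2⟩ := mem_A_zero hz
      obtain ⟨s', hs0', hs1', e1', e2'⟩ := mem_A_zero hz'
      simp only [hg] at e1 e2 e1' e2'
      by_cases h1 : c = h
      · rw [h1, hYh] at e2
        rw [hYc d (fun h2 => hne (h1.trans h2.symm))] at e2'
        norm_num at e2 e2'
        linarith
      · rw [hYc c h1] at e2
        by_cases h2 : d = h
        · rw [h2, hYh] at e2'
          norm_num at e2 e2'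
          linarith
        · rw [hYc d h2] at e2'
          norm_num at e2 e2'
          have hss : s = s' := by linarith
          subst hss
          have : (X c : ℝ) = X d := by
            have : s * (X c : ℝ) = s * X d := by linarith
            exact mul_left_cancel₀ hs0.ne' this
          have : X c = X d := by exact_mod_cast this
          have := hsz c
          have := hsz d
          rcases hsep c hc d hd hne with h' | h' <;> omega)
    (fun c hc d hd z hz hzR => hskR c hc d hd z hz ⟨hzR.1, hzR.2.1, hzR.2.2.1⟩)
    (fun c hc => by simp [hg])
  have hcase : ∀ u ∈ T.D v, u ≠ v → ∃ c ∈ T.ch v, u ∈ T.D c := by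
    intro u hu hne
    obtain ⟨c, hc, huc⟩ := T.exists_hang (v := v) (P := {v}) rfl hu hne
    exact ⟨c, T.hang_single.1 hc, huc⟩
  refine ⟨F, F1, F2, ?_, ?_⟩
  · intro u hu
    by_cases huv : u = v
    · subst huv
      rw [F2]
      simp
    · obtain ⟨c, hc, huc⟩ := hcase u hu huv
      rw [F3 c hc u huc]
      obtain ⟨a1, a2, a3, a4⟩ := hf3 c hc u huc
      have b1 : (X c : ℝ) + (T.sz c - 1 : ℕ) ≤ (n - 1 : ℕ) := by exact_mod_cast hW c hc
      have b2 : (Y c : ℝ) + Nat.log 2 (T.sz c) ≤ Nat.log 2 n := by exact_mod_cast hH c hc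
      have b3 : (0 : ℝ) ≤ X c := by positivity
      have b4 : (0 : ℝ) ≤ Y c := by positivity
      simp only [Int.cast_natCast]
      refine ⟨?_, ?_, ?_, ?_⟩ <;> linarith
  · intro u hu huv
    obtain ⟨c, hc, huc⟩ := hcase u hu huv
    by_cases hu2 : u = c
    · subst hu2
      rw [F3 u hc u huc, (T.mem_ch.1 hc).2, F2, hf2 u hc]
      simp
    · rw [F3 c hc u huc, F3 c hc _ (T.par_mem_D huc hu2).1]
      have := hf4 c hc u huc hu2
      simp only
      linarith

/-! ### A root with its subtrees in cones and in a stack -/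

set_option maxHeartbeats 1600000 in
/-- The star step. The children in `Ti` have small subtrees, which are drawn in disjoint cones with
apex `v` spanned by the integer vectors `p c`, `q c`, within the first `Dp` rows. The other
subtrees are stacked below, with root in the column next to `v`, except that the root of the
lowest one, `h`, is placed vertically below `v`. -/
theorem star (v : V) (Ti : Finset V) (hTi : Ti ⊆ T.ch v) (W Dp : ℕ) (m : V → ℕ)
    (p q : V → ℕ × ℕ)
    (hs : ∀ c ∈ Ti, 1 ≤ m c ∧ T.HasM c (m c - 1) (m c - 1))
    (hpos : ∀ c ∈ Ti, 1 ≤ (p c).1 ∧ 1 ≤ (q c).1)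
    (hdet : ∀ c ∈ Ti, (p c).2 * (q c).1 < (p c).1 * (q c).2)
    (hbd : ∀ c ∈ Ti, m c * ((p c).1 + (q c).1) ≤ W ∧ m c * ((p c).2 + (q c).2) ≤ Dp)
    (hdis : ∀ c ∈ Ti, ∀ d ∈ Ti, c ≠ d →
      (q c).2 * (p d).1 ≤ (q c).1 * (p d).2 ∨ (q d).2 * (p c).1 ≤ (q d).1 * (p c).2)
    (St : Finset V) (hSt : ∀ c, c ∈ St ↔ c ∈ T.ch v ∧ c ∉ Ti)
    (Wc Hc : V → ℕ) (h : V) (hSD : ∀ c ∈ St, T.HasD c (Wc c) (Hc c))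
    (hW1 : ∀ c ∈ St, c ≠ h → Wc c + 1 ≤ W) (hW2 : h ∈ St → Wc h ≤ W) :
    T.HasD v W (Dp + ∑ c ∈ St, (Hc c + 1)) := by
  classical
  have hs' : ∀ c ∈ Ti, T.HasM c (m c - 1) (m c - 1) := fun c hc => (hs c hc).2
  choose! f0 hf1 hf2 hf3 hf4 using hs'
  choose! k0 hk1 hk2 hk3 using hSD
  obtain ⟨o, ho1, ho2⟩ := exists_packing St (fun c => if c = h then 1 else 0) (fun c => Hc c + 1)
  set e : V → ℕ := fun c => if c = h then 0 else 1 with he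
  have he1 : ∀ c, c ≠ h → e c = 1 := fun c hc => by simp [he, hc]
  have heh : e h = 0 := by simp [he]
  set y : V → ℕ := fun c => Dp + 1 + o c with hy
  -- of two stacked subtrees, the upper one has its root in the column next to `v`
  have hsep : ∀ c ∈ St, ∀ d ∈ St, c ≠ d →
      (y c + Hc c < y d ∧ e c = 1) ∨ (y d + Hc d < y c ∧ e d = 1) := by
    intro c hc d hd hne
    rcases ho2 c hc d hd hne with ⟨h1, h2⟩ | ⟨h1, h2⟩
    · left
      refine ⟨by simp only [hy]; omega, he1 c ?_⟩
      rintro rfl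
      simp [Ne.symm hne] at h2
    · right
      refine ⟨by simp only [hy]; omega, he1 d ?_⟩
      rintro rfl
      simp [hne] at h2
  set g : V → ℝ × ℝ := fun c => if c ∈ Ti then
    (((p c).1 : ℝ) + (q c).1, ((p c).2 : ℝ) + (q c).2) else ((e c : ℝ), (y c : ℝ)) with hg
  have hgT : ∀ c ∈ Ti, g c = (((p c).1 : ℝ) + (q c).1, ((p c).2 : ℝ) + (q c).2) :=
    fun c hc => by simp [hg, hc]
  have hSt1 : ∀ c ∈ T.ch v, c ∉ Ti → c ∈ St := fun c h1 h2 => (hSt c).2 ⟨h1, h2⟩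
  have hSt2 : ∀ c ∈ St, c ∉ Ti := fun c h1 => ((hSt c).1 h1).2
  have hgS : ∀ c ∈ St, g c = ((e c : ℝ), (y c : ℝ)) := fun c hc => by simp [hg, hSt2 c hc]
  set δ : V → ℝ := fun c => (p c).1 * (q c).2 - (p c).2 * (q c).1 with hδ
  have hδpos : ∀ c ∈ Ti, 0 < δ c := by
    intro c hc
    have : ((p c).2 : ℝ) * (q c).1 < (p c).1 * (q c).2 := by exact_mod_cast hdet c hc
    simp only [hδ]; linarith
  have hp1 : ∀ c ∈ Ti, (1 : ℝ) ≤ (p c).1 := fun c hc => by exact_mod_cast (hpos c hc).1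
  have hq1 : ∀ c ∈ Ti, (1 : ℝ) ≤ (q c).1 := fun c hc => by exact_mod_cast (hpos c hc).2
  have hmpos : ∀ c ∈ Ti, (1 : ℝ) ≤ m c := fun c hc => by exact_mod_cast (hs c hc).1
  have hbW : ∀ c ∈ Ti, (m c : ℝ) * ((p c).1 + (q c).1) ≤ W :=
    fun c hc => by exact_mod_cast (hbd c hc).1
  have hbD : ∀ c ∈ Ti, (m c : ℝ) * ((p c).2 + (q c).2) ≤ Dp :=
    fun c hc => by exact_mod_cast (hbd c hc).2
  have hpqD : ∀ c ∈ Ti, ((p c).2 : ℝ) + (q c).2 ≤ Dp := by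
    intro c hc
    have := hbD c hc
    have := hmpos c hc
    have : (0 : ℝ) ≤ (p c).2 + (q c).2 := by positivity
    nlinarith
  -- the open cone at `v` reserved for `c`, cut off at depth `Dp`
  let OC : V → ℝ × ℝ → Prop := fun c z => 0 < z.1 * (q c).2 - z.2 * (q c).1 ∧
    0 < (p c).1 * z.2 - (p c).2 * z.1 ∧ 0 < z.1 ∧ z.2 ≤ Dp
  have hOCdis : ∀ c ∈ Ti, ∀ d ∈ Ti, c ≠ d → ∀ z, OC c z → OC d z → False := by
    have aux : ∀ c ∈ Ti, ∀ d ∈ Ti, (q c).2 * (p d).1 ≤ (q c).1 * (p d).2 →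
        ∀ z, OC c z → OC d z → False := by
      rintro c hc d hd hle z ⟨a1, a2, a3, a4⟩ ⟨b1, b2, b3, b4⟩
      have hle' : ((q c).2 : ℝ) * (p d).1 ≤ (q c).1 * (p d).2 := by exact_mod_cast hle
      have i1 := hp1 d hd
      have i2 := hq1 c hc
      have j1 : 0 < (z.1 * (q c).2 - z.2 * (q c).1) * (p d).1 := by positivity
      have j2 : 0 < ((p d).1 * z.2 - (p d).2 * z.1) * ((q c).1 : ℝ) := by positivity
      have j3 : 0 ≤ z.1 * (((q c).1 : ℝ) * (p d).2 - (q c).2 * (p d).1) :=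
        mul_nonneg a3.le (by linarith)
      linarith
    intro c hc d hd hne z h1 h2
    rcases hdis c hc d hd hne with h' | h'
    · exact aux c hc d hd h' z h1 h2
    · exact aux d hd c hc h' z h2 h1
  have hOCslope : ∀ c ∈ Ti, ∀ z, OC c z → 0 < z.2 ∧ z.2 < Dp * z.1 := by
    rintro c hc z ⟨a1, a2, a3, a4⟩
    have i1 := hp1 c hc
    have i2 := hq1 c hc
    have hz2 : 0 < z.2 := by
      by_contra hcon
      have : ((p c).1 : ℝ) * z.2 ≤ 0 := mul_nonpos_of_nonneg_of_nonpos (by linarith) (by linarith)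
      have : (0 : ℝ) ≤ (p c).2 * z.1 := by positivity
      linarith
    refine ⟨hz2, ?_⟩
    have k1 := hpqD c hc
    have k2 : (0 : ℝ) ≤ (p c).2 := by positivity
    have : z.1 * ((q c).2 : ℝ) ≤ z.1 * Dp :=
      mul_le_mul_of_nonneg_left (by linarith) a3.le
    nlinarith
  have hOCarc : ∀ c ∈ Ti, ∀ z ∈ A 0 (g c), OC c z := by
    intro c hc z hz
    obtain ⟨s, s0, s1, e1, e2⟩ := mem_A_zero hz
    rw [hgT c hc] at e1 e2
    simp only at e1 e2
    have i0 := hδpos c hc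
    have i1 := hp1 c hc
    have i2 := hq1 c hc
    have i3 := hpqD c hc
    simp only [hδ] at i0
    refine ⟨?_, ?_, ?_, ?_⟩
    · have : z.1 * (q c).2 - z.2 * (q c).1 =
          s * (((p c).1 : ℝ) * (q c).2 - (p c).2 * (q c).1) := by rw [e1, e2]; ring
      rw [this]; positivity
    · have : (p c).1 * z.2 - (p c).2 * z.1 =
          s * (((p c).1 : ℝ) * (q c).2 - (p c).2 * (q c).1) := by rw [e1, e2]; ring
      rw [this]; positivity
    · rw [e1]; positivity
    · rw [e2]
      have : (0 : ℝ) ≤ (p c).2 + (q c).2 := by positivity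
      nlinarith
  let RC : V → Set (ℝ × ℝ) := fun c => {z | δ c ≤ z.1 * (q c).2 - z.2 * (q c).1 ∧
    δ c ≤ (p c).1 * z.2 - (p c).2 * z.1 ∧ 0 < z.1 ∧ z.2 ≤ Dp}
  have hRCconv : ∀ c, Convex ℝ (RC c) := by
    rintro c x ⟨a1, a2, a3, a4⟩ w ⟨b1, b2, b3, b4⟩ s t hs0 ht0 hst
    have hs1 : s = 1 - t := by linarith
    have ht1 : t ≤ 1 := by linarith
    subst hs1
    simp only [RC, Set.mem_ofPred_eq, Prod.fst_add, Prod.snd_add, Prod.smul_fst, Prod.smul_snd,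
      smul_eq_mul]
    refine ⟨?_, ?_, ?_, ?_⟩
    · nlinarith
    · nlinarith
    · rcases hs0.eq_or_lt with h0 | h0
      · have : t = 1 := by linarith
        subst this
        simpa using b3
      · have := mul_pos h0 a3
        have := mul_nonneg ht0 b3.le
        linarith
    · nlinarith
  have hRCOC : ∀ c ∈ Ti, ∀ z ∈ RC c, OC c z := by
    rintro c hc z ⟨a1, a2, a3, a4⟩
    have := hδpos c hc
    exact ⟨by linarith, by linarith, a3, a4⟩
  let R : V → Set (ℝ × ℝ) := fun c => if c ∈ Ti then RC c else
    Box (e c) (e c + Wc c) (y c) (y c + Hc c)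
  have hRT : ∀ c ∈ Ti, R c = RC c := fun c hc => by simp [R, hc]
  have hRS : ∀ c ∈ St, R c = Box (e c) (e c + Wc c) (y c) (y c + Hc c) :=
    fun c hc => by simp [R, hSt2 c hc]
  let f : V → V → ℝ × ℝ := fun c u => if c ∈ Ti then
    ((((p c).1 + (q c).1 : ℤ) : ℝ) + (f0 c u).1 * ((p c).1 : ℤ) + (f0 c u).2 * ((q c).1 : ℤ),
     (((p c).2 + (q c).2 : ℤ) : ℝ) + (f0 c u).1 * ((p c).2 : ℤ) + (f0 c u).2 * ((q c).2 : ℤ))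
    else (((e c : ℤ) : ℝ) + (k0 c u).1, ((y c : ℤ) : ℝ) + (k0 c u).2)
  have hfT : ∀ c ∈ Ti, ∀ u, f c u =
    ((((p c).1 + (q c).1 : ℤ) : ℝ) + (f0 c u).1 * ((p c).1 : ℤ) + (f0 c u).2 * ((q c).1 : ℤ),
     (((p c).2 + (q c).2 : ℤ) : ℝ) + (f0 c u).1 * ((p c).2 : ℤ) + (f0 c u).2 * ((q c).2 : ℤ)) :=
    fun c hc u => by simp only [f, hc, if_true]
  have hfS : ∀ c ∈ St, ∀ u, f c u = (((e c : ℤ) : ℝ) + (k0 c u).1, ((y c : ℤ) : ℝ) + (k0 c u).2) :=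
    fun c hc u => by simp only [f, hSt2 c hc, if_false]
  have hyD : ∀ c, (Dp : ℝ) + 1 ≤ y c := by
    intro c
    have : Dp + 1 ≤ y c := by simp only [hy]; omega
    exact_mod_cast this
  -- coordinate bounds inside a cone
  have hTbd : ∀ c ∈ Ti, ∀ u ∈ T.D c, 1 ≤ (f c u).1 ∧ (f c u).1 ≤ W ∧ 0 ≤ (f c u).2 ∧
      (f c u).2 ≤ Dp := by
    intro c hc u hu
    obtain ⟨a1, a2, a3, a4⟩ := hf3 c hc u hu
    have hm1 : ((m c - 1 : ℕ) : ℝ) = m c - 1 := by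
      rw [Nat.cast_sub (hs c hc).1]; simp
    rw [hm1] at a2 a4
    have i1 := hp1 c hc
    have i2 := hq1 c hc
    have i3 := hbW c hc
    have i4 := hbD c hc
    have n1 : (0 : ℝ) ≤ (p c).2 := by positivity
    have n2 : (0 : ℝ) ≤ (q c).2 := by positivity
    rw [hfT c hc u]
    push_cast
    have t1 := mul_nonneg a1 (by linarith : (0:ℝ) ≤ (p c).1)
    have t2 := mul_nonneg a3 (by linarith : (0:ℝ) ≤ (q c).1)
    have t3 := mul_nonneg a1 n1
    have t4 := mul_nonneg a3 n2
    have t5 := mul_le_mul_of_nonneg_right a2 (by linarith : (0:ℝ) ≤ (p c).1)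
    have t6 := mul_le_mul_of_nonneg_right a4 (by linarith : (0:ℝ) ≤ (q c).1)
    have t7 := mul_le_mul_of_nonneg_right a2 n1
    have t8 := mul_le_mul_of_nonneg_right a4 n2
    refine ⟨?_, ?_, ?_, ?_⟩ <;> linarith
  have hcasec : ∀ c ∈ T.ch v, c ∈ Ti ∨ c ∈ St := by
    intro c hc
    by_cases h1 : c ∈ Ti
    · exact Or.inl h1
    · exact Or.inr (hSt1 c hc h1)
  have hgS0 : ∀ c ∈ St, 0 < (g c).2 := by
    intro c hc
    rw [hgS c hc]
    have := hyD c
    have : (0 : ℝ) ≤ Dp := by positivity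
    simp only; linarith
  have hST : ∀ c ∈ Ti, ∀ d ∈ St, ∀ z, OC c z → z ∈ A 0 (g d) → False := by
    intro c hc d hd z h1 hz
    obtain ⟨s, s0, s1, e1, e2⟩ := mem_A_zero hz
    rw [hgS d hd] at e1 e2
    simp only at e1 e2
    obtain ⟨i1, i2⟩ := hOCslope c hc z h1
    have j1 := hyD d
    have j2 : (e d : ℝ) ≤ 1 := by
      have : e d ≤ 1 := by simp only [he]; split <;> omega
      exact_mod_cast this
    rw [e1, e2] at i2
    have j3 : (0 : ℝ) ≤ Dp := by positivity
    have : (Dp : ℝ) * (s * e d) ≤ s * Dp := by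
      have := mul_le_mul_of_nonneg_left j2 (mul_nonneg s0.le j3)
      linarith
    nlinarith
  have hSTbox : ∀ c ∈ Ti, ∀ d ∈ St, ∀ z, OC c z → z ∈ R d → False := by
    intro c hc d hd z h1 hz
    rw [hRS d hd] at hz
    have := hyD d
    have := h1.2.2.2
    have := hz.2.2.1
    linarith
  -- edges from `v` against stacked boxes
  have hSS : ∀ c ∈ St, ∀ d ∈ St, ∀ z ∈ A 0 (g c), z ∈ R d → c = d ∧ z = g d := by
    intro c hc d hd z hz hzR
    obtain ⟨s, s0, s1, e1, e2⟩ := mem_A_zero hz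
    rw [hRS d hd] at hzR
    obtain ⟨r1, r2, r3, r4⟩ := hzR
    rw [hgS c hc] at e1 e2
    simp only at e1 e2
    have hyc := hyD c
    have hDp : (0 : ℝ) ≤ Dp := by positivity
    by_cases hcd : c = d
    · subst hcd
      have : s = 1 := by
        have : (0 : ℝ) < y c := by linarith
        nlinarith
      refine ⟨rfl, ?_⟩
      subst this
      rw [hgS c hc]
      exact Prod.ext (by simpa using e1) (by simpa using e2)
    · exfalso
      rcases hsep c hc d hd hcd with ⟨h1, h2⟩ | ⟨h1, h2⟩
      · have h1' : (y c : ℝ) + Hc c < y d := by exact_mod_cast h1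
        have : (0 : ℝ) ≤ Hc c := by positivity
        nlinarith
      · have h1' : (y d : ℝ) + Hc d < y c := by exact_mod_cast h1
        rw [h2] at r1
        norm_num at r1
        by_cases h3 : c = h
        · subst h3
          rw [heh] at e1
          norm_num at e1
          linarith
        · rw [he1 c h3] at e1
          norm_num at e1
          have : s = 1 := by linarith
          subst this
          linarith
  obtain ⟨F, F1, F2, F3⟩ := T.glue_star v g f R
    (by
      intro c hc
      rcases hcasec c hc with h1 | h1
      · rw [hRT c h1]; exact hRCconv c
      · rw [hRS c h1]; exact convex_Box _ _ _ _)
    (by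
      intro c hc u hu
      rcases hcasec c hc with h1 | h1
      · obtain ⟨b1, b2, b3, b4⟩ := hTbd c h1 u hu
        rw [hRT c h1]
        obtain ⟨a1, a2, a3, a4⟩ := hf3 c h1 u hu
        have i0 := hδpos c h1
        refine ⟨?_, ?_, by linarith, b4⟩
        · rw [hfT c h1 u]
          push_cast
          simp only [hδ] at i0 ⊢
          have := mul_nonneg a1 i0.le
          linarith
        · rw [hfT c h1 u]
          push_cast
          simp only [hδ] at i0 ⊢
          have := mul_nonneg a3 i0.le
          linarith
      · rw [hRS c h1, hfS c h1 u]
        obtain ⟨a1, a2, a3, a4⟩ := hk3 c h1 u hu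
        simp only [Box, Set.mem_ofPred_eq, Int.cast_natCast]
        refine ⟨?_, ?_, ?_, ?_⟩ <;> linarith)
    (by
      intro c hc
      rcases hcasec c hc with h1 | h1
      · have : f c = _ := funext (hfT c h1)
        rw [this]
        have := (hf1 c h1).affine ((p c).1 + (q c).1, (p c).2 + (q c).2) ((p c).1, (p c).2)
          ((q c).1, (q c).2) (by
            have : ((p c).2 : ℤ) * (q c).1 < (p c).1 * (q c).2 := by exact_mod_cast hdet c h1
            simp only
            omega) (by
            intro u hu hne
            have a1 := hf4 c h1 u hu hne
            have a2 := (hf1 c h1).up u hu hne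
            simp only [Int.cast_natCast]
            gcongr)
        exact this
      · have : f c = _ := funext (hfS c h1)
        rw [this]
        exact (hk1 c h1).translate _ _)
    (by
      intro c hc
      rcases hcasec c hc with h1 | h1
      · rw [hfT c h1, hgT c h1, hf2 c h1]; simp
      · rw [hfS c h1, hgS c h1, hk2 c h1]; simp)
    (by
      intro c hc d hd hne
      rw [Set.disjoint_left]
      intro z hz hz'
      rcases hcasec c hc with h1 | h1 <;> rcases hcasec d hd with h2 | h2
      · rw [hRT c h1] at hz
        rw [hRT d h2] at hz'
        exact hOCdis c h1 d h2 hne z (hRCOC c h1 z hz) (hRCOC d h2 z hz')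
      · rw [hRT c h1] at hz
        exact hSTbox c h1 d h2 z (hRCOC c h1 z hz) hz'
      · rw [hRT d h2] at hz'
        exact hSTbox d h2 c h1 z (hRCOC d h2 z hz') hz
      · rw [hRS c h1] at hz
        rw [hRS d h2] at hz'
        obtain ⟨a1, a2, a3, a4⟩ := hz
        obtain ⟨b1, b2, b3, b4⟩ := hz'
        rcases hsep c h1 d h2 hne with ⟨h3, _⟩ | ⟨h3, _⟩
        · have : (y c : ℝ) + Hc c < y d := by exact_mod_cast h3
          linarith
        · have : (y d : ℝ) + Hc d < y c := by exact_mod_cast h3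
          linarith)
    (by
      intro c hc h0
      rcases hcasec c hc with h1 | h1
      · have := hp1 c h1
        have := hq1 c h1
        have h2 : (g c).1 = 0 := by rw [h0]; rfl
        rw [hgT c h1] at h2
        simp only at h2
        linarith
      · have := hgS0 c h1
        rw [h0] at this
        simp at this)
    (by
      intro c hc h0
      rcases hcasec c hc with h1 | h1
      · rw [hRT c h1] at h0
        have := h0.2.2.1
        simp at this
      · rw [hRS c h1] at h0
        have h2 := h0.2.2.1
        have := hyD c
        have : (0 : ℝ) ≤ Dp := by positivity
        simp only [Prod.snd_zero] at h2
        linarith)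
    (by
      intro c hc d hd hne
      rw [Set.disjoint_left]
      intro z hz hz'
      rcases hcasec c hc with h1 | h1 <;> rcases hcasec d hd with h2 | h2
      · exact hOCdis c h1 d h2 hne z (hOCarc c h1 z hz) (hOCarc d h2 z hz')
      · exact hST c h1 d h2 z (hOCarc c h1 z hz) hz'
      · exact hST d h2 c h1 z (hOCarc d h2 z hz') hz
      · have aux : ∀ c ∈ St, ∀ d ∈ St, y c + Hc c < y d → e c = 1 →
            ∀ z, z ∈ A 0 (g c) → z ∈ A 0 (g d) → False := by
          intro c hc d hd h3 h4 z hz hz'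
          obtain ⟨s, s0, s1, e1, e2⟩ := mem_A_zero hz
          obtain ⟨s', s0', s1', e1', e2'⟩ := mem_A_zero hz'
          rw [hgS c hc] at e1 e2
          rw [hgS d hd] at e1' e2'
          simp only at e1 e2 e1' e2'
          have h3' : (y c : ℝ) + Hc c < y d := by exact_mod_cast h3
          have hHc : (0 : ℝ) ≤ Hc c := by positivity
          rw [h4] at e1
          by_cases h5 : d = h
          · subst h5
            rw [heh] at e1'
            norm_num at e1 e1'
            linarith
          · rw [he1 d h5] at e1'
            norm_num at e1 e1'
            have : s = s' := by linarith
            subst this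
            nlinarith
        rcases hsep c h1 d h2 hne with ⟨h3, h4⟩ | ⟨h3, h4⟩
        · exact aux c h1 d h2 h3 h4 z hz hz'
        · exact aux d h2 c h1 h3 h4 z hz' hz)
    (by
      intro c hc d hd z hz hzR
      rcases hcasec c hc with h1 | h1 <;> rcases hcasec d hd with h2 | h2
      · have hzR' := hzR
        rw [hRT d h2] at hzR
        by_cases hcd : c = d
        · subst hcd
          refine ⟨rfl, ?_⟩
          obtain ⟨s, s0, s1, e1, e2⟩ := mem_A_zero hz
          rw [hgT c h1] at e1 e2 ⊢
          simp only at e1 e2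
          have i0 := hδpos c h1
          have i1 := hzR.1
          have : z.1 * (q c).2 - z.2 * (q c).1 = s * δ c := by
            simp only [hδ]; rw [e1, e2]; ring
          rw [this] at i1
          have : s = 1 := by nlinarith
          subst this
          exact Prod.ext (by simpa using e1) (by simpa using e2)
        · exact (hOCdis c h1 d h2 hcd z (hOCarc c h1 z hz) (hRCOC d h2 z hzR)).elim
      · exact (hSTbox c h1 d h2 z (hOCarc c h1 z hz) hzR).elim
      · rw [hRT d h2] at hzR
        exact (hST d h2 c h1 z (hRCOC d h2 z hzR) hz).elim
      · exact hSS c h1 d h2 z hz hzR)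
    (by
      intro c hc
      rcases hcasec c hc with h1 | h1
      · rw [hgT c h1]; simp only; positivity
      · exact (hgS0 c h1).le)
  refine ⟨F, F1, F2, ?_⟩
  intro u hu
  by_cases huv : u = v
  · subst huv
    rw [F2]
    simp only [Prod.fst_zero, Prod.snd_zero, le_refl, true_and]
    exact ⟨by positivity, by positivity⟩
  · obtain ⟨c, hc, huc⟩ := T.exists_hang (v := v) (P := {v}) rfl hu huv
    rw [T.hang_single] at hc
    rw [F3 c hc u huc]
    rcases hcasec c hc with h1 | h1
    · obtain ⟨b1, b2, b3, b4⟩ := hTbd c h1 u huc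
      push_cast
      have : (0 : ℝ) ≤ ∑ c ∈ St, ((Hc c : ℝ) + 1) := by positivity
      exact ⟨by linarith, b2, b3, by linarith⟩
    · rw [hfS c h1 u]
      obtain ⟨a1, a2, a3, a4⟩ := hk3 c h1 u huc
      have b1 : e c + Wc c ≤ W := by
        by_cases h2 : c = h
        · subst h2
          rw [heh]
          have := hW2 h1
          omega
        · rw [he1 c h2]
          have := hW1 c h1 h2
          omega
      have b1' : (e c : ℝ) + Wc c ≤ W := by exact_mod_cast b1
      have b2 : y c + Hc c ≤ Dp + ∑ c ∈ St, (Hc c + 1) := by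
        have := ho1 c h1
        simp only [hy]
        omega
      have b2' : (y c : ℝ) + Hc c ≤ (Dp + ∑ c ∈ St, (Hc c + 1) : ℕ) := by exact_mod_cast b2
      have b3 : (0 : ℝ) ≤ e c := by positivity
      have b4 : (0 : ℝ) ≤ y c := by positivity
      simp only [Int.cast_natCast]
      refine ⟨?_, ?_, ?_, ?_⟩ <;> linarith

end RTree

/-! ### Rational slopes with small denominators -/

/-- The totients up to `X` have sum `Ω(X²)`. It follows from `∑ d ≤ X, φ d * ⌊X / d⌋ = X (X + 1) / 2`:
the terms with `4 * d ≤ X` contribute at most `X` each, the others have `⌊X / d⌋ < 4`. -/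
lemma sum_totient_ge (X : ℕ) : X ^ 2 ≤ 16 * ∑ d ∈ Finset.Icc 1 X, Nat.totient d := by
  have h1 : ∑ d ∈ Finset.Icc 1 X, Nat.totient d * (X / d) = ∑ n ∈ Finset.Icc 1 X, n := by
    have : ∀ n ∈ Finset.Icc 1 X, n = ∑ d ∈ Finset.Icc 1 X, if d ∣ n then Nat.totient d else 0 := by
      intro n hn
      rw [Finset.mem_Icc] at hn
      conv_lhs => rw [← Nat.sum_totient n]
      rw [← Finset.sum_filter]
      apply Finset.sum_congr _ (fun _ _ => rfl)
      ext d
      simp only [Nat.mem_divisors, Finset.mem_filter, Finset.mem_Icc]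
      constructor
      · rintro ⟨h1, h2⟩
        have := Nat.pos_of_dvd_of_pos h1 (by omega)
        have := Nat.le_of_dvd (by omega) h1
        exact ⟨⟨by omega, by omega⟩, h1⟩
      · rintro ⟨h1, h2⟩
        exact ⟨h2, by omega⟩
    rw [Finset.sum_congr rfl this, Finset.sum_comm]
    apply Finset.sum_congr rfl
    intro d hd
    rw [← Finset.sum_filter, Finset.sum_const, smul_eq_mul, mul_comm]
    congr 1
    have := Nat.Ioc_filter_dvd_card_eq_div X d
    rw [← this]
    rfl
  have h2 : 2 * ∑ n ∈ Finset.Icc 1 X, n = X * (X + 1) := by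
    have := Finset.sum_range_id_mul_two (X + 1)
    rw [Finset.range_eq_Ico, Finset.sum_eq_sum_Ico_succ_bot (by omega)] at this
    have e : Finset.Ico (0 + 1) (X + 1) = Finset.Icc 1 X := by
      ext
      simp only [Finset.mem_Ico, Finset.mem_Icc]
      omega
    rw [e] at this
    simp at this
    linarith
  have h3 : ∀ d ∈ Finset.Icc 1 X,
      Nat.totient d * (X / d) ≤ 3 * Nat.totient d + (if 4 * d ≤ X then X else 0) := by
    intro d hd
    rw [Finset.mem_Icc] at hd
    split_ifs with h
    · have : Nat.totient d * (X / d) ≤ d * (X / d) := Nat.mul_le_mul_right _ (Nat.totient_le d)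
      have := Nat.mul_div_le X d
      omega
    · have : X / d < 4 := by rw [Nat.div_lt_iff_lt_mul (by omega)]; omega
      have : X / d ≤ 3 := by omega
      nlinarith
  have h4 := Finset.sum_le_sum h3
  rw [h1, Finset.sum_add_distrib, ← Finset.mul_sum, ← Finset.sum_filter, Finset.sum_const,
    smul_eq_mul] at h4
  have h5 : ((Finset.Icc 1 X).filter (fun d => 4 * d ≤ X)).card ≤ X / 4 := by
    have : (Finset.Icc 1 X).filter (fun d => 4 * d ≤ X) ⊆ Finset.Icc 1 (X / 4) := by
      intro d
      simp only [Finset.mem_filter, Finset.mem_Icc]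
      omega
    simpa using Finset.card_le_card this
  have h6 : 4 * (((Finset.Icc 1 X).filter (fun d => 4 * d ≤ X)).card * X) ≤ X * X := by
    rw [← mul_assoc]
    exact Nat.mul_le_mul_right _ (by omega)
  nlinarith

/-- Many fractions with denominators at most `X` in an interval of integer length. -/
lemma exists_fractions (a σ X : ℕ) : ∃ R : Finset ℚ,
    (∀ r ∈ R, (a : ℚ) ≤ r ∧ r < a + σ ∧ r.den ≤ X) ∧ σ * X ^ 2 ≤ 16 * R.card := by
  classical
  let N : ℕ → Finset ℕ := fun d => (Finset.Ico (a * d) (a * d + σ * d)).filter (d.Coprime)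
  have hden : ∀ d ∈ Finset.Icc 1 X, ∀ n ∈ N d, ((n : ℚ) / d).den = d := by
    intro d hd n hn
    rw [Finset.mem_Icc] at hd
    have h := (Finset.mem_filter.1 hn).2
    have := Rat.den_div_eq_of_coprime (a := n) (b := d) (by omega) (by simpa using h.symm)
    push_cast at this
    exact_mod_cast this
  have hcard : ∀ d, (N d).card = σ * Nat.totient d := by
    intro d
    clear hden
    induction σ with
    | zero => simp [N]
    | succ σ ih =>
      have h1 : (Finset.Ico (a * d) (a * d + (σ + 1) * d)).filter (d.Coprime) =
          (Finset.Ico (a * d) (a * d + σ * d)).filter (d.Coprime) ∪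
          (Finset.Ico (a * d + σ * d) (a * d + σ * d + d)).filter (d.Coprime) := by
        rw [← Finset.filter_union, Finset.Ico_union_Ico_eq_Ico (by omega) (by omega)]
        congr 2
        ring
      simp only [N] at ih ⊢
      rw [h1, Finset.card_union_of_disjoint, ih, Nat.filter_coprime_Ico_eq_totient]
      · ring
      · apply Finset.disjoint_filter_filter
        exact Finset.Ico_disjoint_Ico_consecutive _ _ _
  refine ⟨(Finset.Icc 1 X).biUnion fun d => (N d).image fun n : ℕ => (n : ℚ) / d, ?_, ?_⟩
  · intro r hr
    simp only [Finset.mem_biUnion, Finset.mem_image] at hr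
    obtain ⟨d, hd, n, hn, rfl⟩ := hr
    rw [hden d hd n hn]
    rw [Finset.mem_Icc] at hd
    have h := (Finset.mem_filter.1 hn).1
    rw [Finset.mem_Ico] at h
    have hd0 : (0 : ℚ) < d := by exact_mod_cast hd.1
    refine ⟨?_, ?_, hd.2⟩
    · rw [le_div_iff₀ hd0]
      exact_mod_cast h.1
    · rw [div_lt_iff₀ hd0, add_mul]
      exact_mod_cast h.2
  · rw [Finset.card_biUnion]
    · have : ∀ d ∈ Finset.Icc 1 X, ((N d).image fun n : ℕ => (n : ℚ) / d).card =
          σ * Nat.totient d := by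
        intro d hd
        rw [← hcard d]
        apply Finset.card_image_of_injOn
        intro x _ y _ hxy
        rw [Finset.mem_Icc] at hd
        have hd0 : (d : ℚ) ≠ 0 := by
          have : d ≠ 0 := by omega
          exact_mod_cast this
        have : (x : ℚ) = y := by
          simpa [div_left_inj' hd0] using hxy
        exact_mod_cast this
      rw [Finset.sum_congr rfl this, ← Finset.mul_sum]
      have := sum_totient_ge X
      nlinarith
    · intro d hd d' hd' hne
      rw [Function.onFun, Finset.disjoint_left]
      intro r hr hr'
      rw [Finset.mem_image] at hr hr'
      obtain ⟨n, hn, rfl⟩ := hr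
      obtain ⟨n', hn', h⟩ := hr'
      apply hne
      rw [← hden d hd n hn, ← hden d' hd' n' hn', h]

/-- The elements of `s` receive disjoint intervals with endpoints in `R`. -/
lemma exists_intervals {ι : Type} (s : Finset ι) (R : Finset ℚ) (h : s.card + 1 ≤ R.card) :
    ∃ lo hi : ι → ℚ, (∀ t ∈ s, lo t ∈ R ∧ hi t ∈ R ∧ lo t < hi t) ∧
      ∀ t ∈ s, ∀ t' ∈ s, t ≠ t' → hi t ≤ lo t' ∨ hi t' ≤ lo t := by
  classical
  induction s using Finset.induction_on generalizing R with
  | empty => exact ⟨fun _ => 0, fun _ => 0, by simp, by simp⟩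
  | insert a s ha ih =>
    rw [Finset.card_insert_of_notMem ha] at h
    have hR : R.Nonempty := Finset.card_pos.1 (by omega)
    set M := R.max' hR
    have hM : M ∈ R := R.max'_mem hR
    have hc : (R.erase M).card = R.card - 1 := Finset.card_erase_of_mem hM
    have hR' : (R.erase M).Nonempty := Finset.card_pos.1 (by omega)
    set M' := (R.erase M).max' hR'
    have hM' : M' ∈ R.erase M := Finset.max'_mem _ hR'
    have hlt : M' < M :=
      lt_of_le_of_ne (R.le_max' _ (Finset.mem_of_mem_erase hM')) (Finset.ne_of_mem_erase hM')
    obtain ⟨lo, hi, h1, h2⟩ := ih (R.erase M) (by omega)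
    have hne : ∀ t ∈ s, t ≠ a := fun t ht h => ha (h ▸ ht)
    refine ⟨fun t => if t = a then M' else lo t, fun t => if t = a then M else hi t, ?_, ?_⟩
    · intro t ht
      by_cases hta : t = a
      · simp only [hta, if_true]
        exact ⟨Finset.mem_of_mem_erase hM', hM, hlt⟩
      · have ht : t ∈ s := (Finset.mem_insert.1 ht).resolve_left hta
        simp only [hta, if_false]
        obtain ⟨a1, a2, a3⟩ := h1 t ht
        exact ⟨Finset.mem_of_mem_erase a1, Finset.mem_of_mem_erase a2, a3⟩
    · intro t ht t' ht' htt
      by_cases hta : t = a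
      · have hta' : t' ≠ a := fun h => htt (hta.trans h.symm)
        have ht' : t' ∈ s := (Finset.mem_insert.1 ht').resolve_left hta'
        simp only [hta, hta', if_true, if_false]
        exact Or.inr (Finset.le_max' _ _ (h1 t' ht').2.1)
      · have ht : t ∈ s := (Finset.mem_insert.1 ht).resolve_left hta
        by_cases hta' : t' = a
        · simp only [hta, hta', if_true, if_false]
          exact Or.inl (Finset.le_max' _ _ (h1 t ht).2.1)
        · have ht' : t' ∈ s := (Finset.mem_insert.1 ht').resolve_left hta'
          simp only [hta, hta', if_false]
          exact h2 t ht t' ht' htt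

/-! ### Fans of disjoint cones -/

/-- Disjoint intervals of slopes for items of sizes `m t ≤ B`, where the denominators at the ends of
the interval of `t` are `O(U / m t)`. The items are grouped into dyadic size classes. -/
lemma fan_raw {ι : Type} (s : Finset ι) (m : ι → ℕ) (B U : ℕ) (hU : B ≤ U) (hB : 1 ≤ B)
    (hm : ∀ t ∈ s, 1 ≤ m t ∧ m t ≤ B) :
    ∃ (lo hi : ι → ℚ) (S : ℕ),
      (∀ t ∈ s, 1 ≤ lo t ∧ lo t < hi t ∧ hi t ≤ 1 + S ∧ m t * (lo t).den ≤ 2 * U ∧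
        m t * (hi t).den ≤ 2 * U) ∧
      (∀ t ∈ s, ∀ t' ∈ s, t ≠ t' → hi t ≤ lo t' ∨ hi t' ≤ lo t) ∧
      U ^ 2 * S ≤ 64 * B * ∑ t ∈ s, m t + 65 * (Nat.log 2 B + 1) * U ^ 2 := by
  classical
  set J := Nat.log 2 B + 1 with hJ
  let cl : ℕ → Finset ι := fun j => s.filter fun t => Nat.log 2 (m t) = j
  let X : ℕ → ℕ := fun j => U / 2 ^ j
  let σ : ℕ → ℕ := fun j => 16 * ((cl j).card + 1) / X j ^ 2 + 1
  let a : ℕ → ℕ := fun j => 1 + ∑ i ∈ Finset.range j, σ i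
  have hpow : ∀ j < J, 2 ^ j ≤ B := fun j hj => Nat.pow_le_of_le_log (by omega) (by omega)
  have hX : ∀ j < J, 1 ≤ X j ∧ U ≤ 2 * 2 ^ j * X j := by
    intro j hj
    have h1 := hpow j hj
    have h2 : 1 ≤ X j := by
      simp only [X]
      rw [Nat.one_le_div_iff (by positivity)]
      omega
    refine ⟨h2, ?_⟩
    have h3 := Nat.lt_mul_div_succ U (show 0 < 2 ^ j by positivity)
    have : 2 ^ j ≤ 2 ^ j * X j := Nat.le_mul_of_pos_right _ h2
    change U < 2 ^ j * (X j + 1) at h3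
    nlinarith
  have hfr : ∀ j, ∃ lo hi : ι → ℚ, j < J → (∀ t ∈ cl j, (a j : ℚ) ≤ lo t ∧ lo t < hi t ∧
      hi t ≤ a (j + 1) ∧ (lo t).den ≤ X j ∧ (hi t).den ≤ X j) ∧
      ∀ t ∈ cl j, ∀ t' ∈ cl j, t ≠ t' → hi t ≤ lo t' ∨ hi t' ≤ lo t := by
    intro j
    by_cases hj : j < J
    · obtain ⟨R, hR1, hR2⟩ := exists_fractions (a j) (σ j) (X j)
      have hX2 : 0 < X j ^ 2 := by have := (hX j hj).1; positivity
      have h1 : 16 * ((cl j).card + 1) < σ j * X j ^ 2 := by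
        have := Nat.lt_mul_div_succ (16 * ((cl j).card + 1)) hX2
        calc _ < X j ^ 2 * σ j := this
          _ = _ := mul_comm _ _
      obtain ⟨lo, hi, h2, h3⟩ := exists_intervals (cl j) R (by omega)
      refine ⟨lo, hi, fun _ => ⟨fun t ht => ?_, h3⟩⟩
      obtain ⟨b1, b2, b3⟩ := h2 t ht
      obtain ⟨c1, c2, c3⟩ := hR1 _ b1
      obtain ⟨d1, d2, d3⟩ := hR1 _ b2
      refine ⟨c1, b3, ?_, c3, d3⟩
      have : a (j + 1) = a j + σ j := by simp only [a]; rw [Finset.sum_range_succ]; ring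
      rw [this]
      push_cast
      exact d2.le
    · exact ⟨fun _ => 0, fun _ => 0, fun h => absurd h hj⟩
  choose lo hi hlh using hfr
  have hlog : ∀ t ∈ s, Nat.log 2 (m t) < J ∧ t ∈ cl (Nat.log 2 (m t)) := by
    intro t ht
    refine ⟨?_, by simp [cl, ht]⟩
    have := Nat.log_mono_right (b := 2) (hm t ht).2
    omega
  have hamono : ∀ i j, i ≤ j → a i ≤ a j := by
    intro i j hij
    simp only [a]
    gcongr
  refine ⟨fun t => lo (Nat.log 2 (m t)) t, fun t => hi (Nat.log 2 (m t)) t,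
    ∑ i ∈ Finset.range J, σ i, ?_, ?_, ?_⟩
  · intro t ht
    obtain ⟨h1, h2⟩ := hlog t ht
    set j := Nat.log 2 (m t)
    obtain ⟨b1, b2, b3, b4, b5⟩ := (hlh j h1).1 t h2
    have hmt : m t < 2 * 2 ^ j := by
      have := Nat.lt_pow_succ_log_self (b := 2) (by omega) (m t)
      rw [pow_succ, mul_comm] at this
      exact this
    have hd : ∀ d, d ≤ X j → m t * d ≤ 2 * U := by
      intro d hd
      have : 2 ^ j * X j ≤ U := Nat.mul_div_le U (2 ^ j)
      calc m t * d ≤ (2 * 2 ^ j) * X j := Nat.mul_le_mul hmt.le hd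
        _ ≤ 2 * U := by nlinarith
    have ha1 : (1 : ℚ) ≤ a j := by
      have : 1 ≤ a j := Nat.le_add_right _ _
      exact_mod_cast this
    have ha2 : (a (j + 1) : ℚ) ≤ 1 + (∑ i ∈ Finset.range J, σ i : ℕ) := by
      have := hamono (j + 1) J (by omega)
      have e : a J = 1 + ∑ i ∈ Finset.range J, σ i := rfl
      rw [e] at this
      exact_mod_cast this
    exact ⟨ha1.trans b1, b2, b3.trans ha2, hd _ b4, hd _ b5⟩
  · intro t ht t' ht' hne
    obtain ⟨h1, h2⟩ := hlog t ht
    obtain ⟨h1', h2'⟩ := hlog t' ht'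
    obtain ⟨b1, b2, b3, b4, b5⟩ := (hlh _ h1).1 t h2
    obtain ⟨b1', b2', b3', b4', b5'⟩ := (hlh _ h1').1 t' h2'
    rcases lt_trichotomy (Nat.log 2 (m t)) (Nat.log 2 (m t')) with h | h | h
    · left
      have : (a (Nat.log 2 (m t) + 1) : ℚ) ≤ a (Nat.log 2 (m t')) := by
        exact_mod_cast hamono _ _ h
      exact b3.trans (this.trans b1')
    · simp only
      rw [← h] at h2' ⊢
      exact (hlh _ h1).2 t h2 t' h2' hne
    · right
      have : (a (Nat.log 2 (m t') + 1) : ℚ) ≤ a (Nat.log 2 (m t)) := by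
        exact_mod_cast hamono _ _ h
      exact b3'.trans (this.trans b1)
  · have key : ∀ j ∈ Finset.range J, U ^ 2 * σ j ≤ 64 * B * ∑ t ∈ cl j, m t + 65 * U ^ 2 := by
      intro j hj
      rw [Finset.mem_range] at hj
      obtain ⟨h1, h2⟩ := hX j hj
      have h3 := hpow j hj
      set k := (cl j).card with hk
      set q := 16 * (k + 1) / X j ^ 2 with hq
      have h4 : X j ^ 2 * q ≤ 16 * (k + 1) := Nat.mul_div_le _ _
      have h5 : 2 ^ j * k ≤ ∑ t ∈ cl j, m t := by
        rw [mul_comm, ← smul_eq_mul, hk]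
        apply Finset.card_nsmul_le_sum
        intro t ht
        have ht := Finset.mem_filter.1 ht
        rw [← ht.2]
        exact Nat.pow_log_le_self 2 (by have := (hm t ht.1).1; omega)
      have h6 : U ^ 2 ≤ (2 * 2 ^ j * X j) ^ 2 := Nat.pow_le_pow_left h2 2
      have h7 : U ^ 2 * q ≤ 64 * (2 ^ j) ^ 2 * (k + 1) := by
        calc U ^ 2 * q ≤ (2 * 2 ^ j * X j) ^ 2 * q := Nat.mul_le_mul_right _ h6
          _ = 4 * (2 ^ j) ^ 2 * (X j ^ 2 * q) := by ring
          _ ≤ 4 * (2 ^ j) ^ 2 * (16 * (k + 1)) := Nat.mul_le_mul_left _ h4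
          _ = _ := by ring
      have h8 : (2 ^ j) ^ 2 * k ≤ B * ∑ t ∈ cl j, m t := by
        calc (2 ^ j) ^ 2 * k = 2 ^ j * (2 ^ j * k) := by ring
          _ ≤ _ := Nat.mul_le_mul h3 h5
      have h9 : (2 ^ j) ^ 2 ≤ U ^ 2 := Nat.pow_le_pow_left (h3.trans hU) 2
      change U ^ 2 * (q + 1) ≤ _
      nlinarith
    have h1 := Finset.sum_le_sum key
    rw [Finset.sum_add_distrib, ← Finset.mul_sum, Finset.sum_const, Finset.card_range,
      smul_eq_mul] at h1
    have h0 : ∑ j ∈ Finset.range J, 64 * B * ∑ t ∈ cl j, m t =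
        64 * B * ∑ j ∈ Finset.range J, ∑ t ∈ cl j, m t := (Finset.mul_sum _ _ _).symm
    rw [h0] at h1
    have h2 : ∑ j ∈ Finset.range J, ∑ t ∈ cl j, m t = ∑ t ∈ s, m t := by
      apply Finset.sum_fiberwise_of_maps_to
      intro t ht
      exact Finset.mem_range.2 (hlog t ht).1
    rw [h2] at h1
    linarith

/-- The cones of `fan_raw` spanned by integer vectors, either as they are or reflected in the
diagonal. With `U = a` they are narrow and deep; if the total size is too small for the depth to be
paid for, a smaller `U` and reflected cones give wide and shallow ones. -/
lemma fan {ι : Type} (s : Finset ι) (m : ι → ℕ) (a B L : ℕ) (hB : 1 ≤ B) (hBA : B ^ 2 ≤ a)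
    (hL : Nat.log 2 B + 1 ≤ L) (hm : ∀ t ∈ s, 1 ≤ m t ∧ m t ≤ B) :
    ∃ (p q : ι → ℕ × ℕ) (Dp : ℕ),
      (∀ c ∈ s, 1 ≤ (p c).1 ∧ 1 ≤ (q c).1) ∧
      (∀ c ∈ s, (p c).2 * (q c).1 < (p c).1 * (q c).2) ∧
      (∀ c ∈ s, m c * ((p c).1 + (q c).1) ≤ 520 * a ∧ m c * ((p c).2 + (q c).2) ≤ Dp) ∧
      (∀ c ∈ s, ∀ d ∈ s, c ≠ d →
        (q c).2 * (p d).1 ≤ (q c).1 * (p d).2 ∨ (q d).2 * (p c).1 ≤ (q d).1 * (p c).2) ∧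
      Dp * B ≤ 1040 * L ^ 2 * (∑ t ∈ s, m t + B ^ 2) := by
  classical
  set M := ∑ t ∈ s, m t with hM
  have hL1 : 1 ≤ L := by omega
  have hLL : L ≤ L ^ 2 := Nat.le_self_pow (by norm_num) L
  have hBa : B ≤ a := (Nat.le_self_pow (by norm_num) B).trans hBA
  -- the integer data extracted from `fan_raw`
  have main : ∀ U, B ≤ U → ∃ (x y x' y' : ι → ℕ) (S : ℕ),
      (∀ t ∈ s, 1 ≤ x t ∧ 1 ≤ x' t ∧ 1 ≤ y t ∧ 1 ≤ y' t ∧ y t * x' t < y' t * x t ∧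
        m t * (x t + x' t) ≤ 4 * U ∧ m t * (y t + y' t) ≤ 4 * U * (1 + S)) ∧
      (∀ t ∈ s, ∀ t' ∈ s, t ≠ t' → y' t * x t' ≤ y t' * x' t ∨ y' t' * x t ≤ y t * x' t') ∧
      U ^ 2 * S ≤ 64 * B * M + 65 * L * U ^ 2 := by
    intro U hU
    obtain ⟨lo, hi, S, h1, h2, h3⟩ := fan_raw s m B U hU hB hm
    have hq : ∀ r : ℚ, 1 ≤ r → ((r.num.toNat : ℚ) = r * r.den) := by
      intro r hr
      have : (0 : ℤ) ≤ r.num := Rat.num_nonneg.2 (by linarith)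
      have e : ((r.num.toNat : ℤ) : ℚ) = r.num := by rw [Int.toNat_of_nonneg this]
      rw [Rat.mul_den_eq_num]
      exact_mod_cast e
    have hden : ∀ r : ℚ, (0 : ℚ) < r.den := fun r => by exact_mod_cast r.den_pos
    refine ⟨fun t => (lo t).den, fun t => (lo t).num.toNat, fun t => (hi t).den,
      fun t => (hi t).num.toNat, S, ?_, ?_, ?_⟩
    · intro t ht
      obtain ⟨b1, b2, b3, b4, b5⟩ := h1 t ht
      have e1 := hq _ b1
      have e2 := hq _ (b1.trans b2.le)
      have d1 := hden (lo t)
      have d2 := hden (hi t)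
      have f1 : (lo t).den ≤ (lo t).num.toNat := by
        have : ((lo t).den : ℚ) ≤ (lo t).num.toNat := by rw [e1]; nlinarith
        exact_mod_cast this
      have f2 : (hi t).den ≤ (hi t).num.toNat := by
        have : ((hi t).den : ℚ) ≤ (hi t).num.toNat := by rw [e2]; nlinarith
        exact_mod_cast this
      have g1 : (lo t).num.toNat ≤ (lo t).den * (1 + S) := by
        have : ((lo t).num.toNat : ℚ) ≤ (lo t).den * (1 + S) := by rw [e1]; nlinarith
        exact_mod_cast this
      have g2 : (hi t).num.toNat ≤ (hi t).den * (1 + S) := by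
        have : ((hi t).num.toNat : ℚ) ≤ (hi t).den * (1 + S) := by rw [e2]; nlinarith
        exact_mod_cast this
      have k1 := (lo t).den_pos
      have k2 := (hi t).den_pos
      refine ⟨k1, k2, Nat.le_trans k1 f1, Nat.le_trans k2 f2, ?_, ?_, ?_⟩
      · have : ((lo t).num.toNat : ℚ) * (hi t).den < (hi t).num.toNat * (lo t).den := by
          rw [e1, e2]
          have := mul_pos d1 d2
          nlinarith
        exact_mod_cast this
      · simp only
        rw [mul_add]
        omega
      · calc m t * ((lo t).num.toNat + (hi t).num.toNat)
            ≤ m t * ((lo t).den * (1 + S) + (hi t).den * (1 + S)) := by gcongr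
          _ = (m t * (lo t).den + m t * (hi t).den) * (1 + S) := by ring
          _ ≤ _ := by gcongr; omega
    · have aux : ∀ t ∈ s, ∀ t' ∈ s, hi t ≤ lo t' →
          (hi t).num.toNat * (lo t').den ≤ (lo t').num.toNat * (hi t).den := by
        intro t ht t' ht' h
        have e1 := hq _ ((h1 t ht).1.trans (h1 t ht).2.1.le)
        have e2 := hq _ (h1 t' ht').1
        have d1 := hden (hi t)
        have d2 := hden (lo t')
        have : ((hi t).num.toNat : ℚ) * (lo t').den ≤ (lo t').num.toNat * (hi t).den := by
          rw [e1, e2]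
          have := mul_pos d1 d2
          nlinarith
        exact_mod_cast this
      intro t ht t' ht' hne
      exact (h2 t ht t' ht' hne).imp (aux t ht t' ht') (aux t' ht' t ht)
    · refine h3.trans ?_
      gcongr
  set U0 := M / B + B + 1 with hU0
  have hU0B : B ≤ U0 := (Nat.le_add_left _ _).trans (Nat.le_succ _)
  have hMU : M ≤ B * U0 := by
    have := Nat.lt_mul_div_succ M (show 0 < B by omega)
    have : B * (M / B + 1) ≤ B * U0 := Nat.mul_le_mul_left _ (by rw [hU0, add_right_comm]; exact Nat.le_add_right _ _)
    omega
  have hUM : B * U0 ≤ M + 2 * B ^ 2 := by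
    have := Nat.mul_div_le M B
    have : B * U0 = B * (M / B) + B ^ 2 + B := by rw [hU0]; ring
    nlinarith
  rcases le_or_gt (L * U0) a with hcase | hcase
  · obtain ⟨x, y, x', y', S, h1, h2, h3⟩ := main U0 hU0B
    have hU0pos : 0 < U0 := by omega
    have hS : U0 * S ≤ 129 * a := by
      have : U0 * (U0 * S) ≤ U0 * (129 * a) := by
        calc U0 * (U0 * S) = U0 ^ 2 * S := by ring
          _ ≤ 64 * B * M + 65 * L * U0 ^ 2 := h3
          _ ≤ 64 * B * (B * U0) + 65 * L * U0 ^ 2 := by gcongr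
          _ = U0 * (64 * B ^ 2 + 65 * (L * U0)) := by ring
          _ ≤ U0 * (64 * a + 65 * a) := by gcongr
          _ = _ := by ring
      exact Nat.le_of_mul_le_mul_left this hU0pos
    have hU0a : U0 ≤ a := (Nat.le_mul_of_pos_left _ hL1).trans hcase
    refine ⟨fun t => (y' t, x' t), fun t => (y t, x t), 4 * U0, ?_, ?_, ?_, ?_, ?_⟩
    · intro t ht
      obtain ⟨b1, b2, b3, b4, b5, b6, b7⟩ := h1 t ht
      exact ⟨b4, b3⟩
    · intro t ht
      obtain ⟨b1, b2, b3, b4, b5, b6, b7⟩ := h1 t ht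
      simp only
      rw [mul_comm (x' t)]
      exact b5
    · intro t ht
      obtain ⟨b1, b2, b3, b4, b5, b6, b7⟩ := h1 t ht
      simp only
      rw [add_comm (y' t), add_comm (x' t)]
      exact ⟨b7.trans (by nlinarith), b6⟩
    · intro t ht t' ht' hne
      simp only
      rcases h2 t ht t' ht' hne with h | h
      · right; linarith
      · left; linarith
    · calc 4 * U0 * B = 4 * (B * U0) := by ring
        _ ≤ 4 * (M + 2 * B ^ 2) := by gcongr
        _ ≤ 1040 * 1 * (M + B ^ 2) := by omega
        _ ≤ _ := by gcongr; omega
  · obtain ⟨x, y, x', y', S, h1, h2, h3⟩ := main a hBa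
    have hapos : 0 < a := by omega
    have hS : a * S * B ≤ 64 * M + 65 * L * (a * B) := by
      have : a * (a * S * B) ≤ a * (64 * M + 65 * L * (a * B)) := by
        calc a * (a * S * B) = a ^ 2 * S * B := by ring
          _ ≤ (64 * B * M + 65 * L * a ^ 2) * B := by gcongr
          _ = 64 * M * B ^ 2 + 65 * L * a ^ 2 * B := by ring
          _ ≤ 64 * M * a + 65 * L * a ^ 2 * B := by gcongr
          _ = _ := by ring
      exact Nat.le_of_mul_le_mul_left this hapos
    have hab : a * B ≤ L * (M + 2 * B ^ 2) := by
      calc a * B ≤ L * U0 * B := by gcongr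
        _ = L * (B * U0) := by ring
        _ ≤ _ := by gcongr
    refine ⟨fun t => (x t, y t), fun t => (x' t, y' t), 4 * a * (1 + S), ?_, ?_, ?_, ?_, ?_⟩
    · intro t ht
      obtain ⟨b1, b2, b3, b4, b5, b6, b7⟩ := h1 t ht
      exact ⟨b1, b2⟩
    · intro t ht
      obtain ⟨b1, b2, b3, b4, b5, b6, b7⟩ := h1 t ht
      simp only
      rw [mul_comm (x t)]
      exact b5
    · intro t ht
      obtain ⟨b1, b2, b3, b4, b5, b6, b7⟩ := h1 t ht
      exact ⟨b6.trans (by omega), b7⟩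
    · intro t ht t' ht' hne
      simp only
      rw [mul_comm (x' t), mul_comm (x' t')]
      exact h2 t ht t' ht' hne
    · have hL3 : L * L = L ^ 2 := by ring
      calc 4 * a * (1 + S) * B = 4 * (a * B) + 4 * (a * S * B) := by ring
        _ ≤ 4 * (a * B) + 4 * (64 * M + 65 * L * (a * B)) := by gcongr
        _ ≤ 4 * (L * (M + 2 * B ^ 2)) +
            4 * (64 * M + 65 * L * (L * (M + 2 * B ^ 2))) := by gcongr
        _ = (4 * L + 260 * L ^ 2) * (M + 2 * B ^ 2) + 256 * M := by ring
        _ ≤ (4 * L ^ 2 + 260 * L ^ 2) * (2 * (M + B ^ 2)) + 256 * (L ^ 2 * (M + B ^ 2)) := by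
            gcongr
            · omega
            · calc M ≤ 1 * (M + B ^ 2) := by omega
                _ ≤ _ := by gcongr; omega
        _ ≤ _ := by nlinarith [Nat.zero_le (L ^ 2 * (M + B ^ 2))]

namespace RTree
set_option linter.unusedSectionVars false
variable {V : Type} [Fintype V] (T : RTree V)

/-! ### The cost of the star step -/

/-- The star step with its costs: the children outside `Bg` have subtrees of size at most `a`; among
those, the ones of size at most `B` go into a fan and the others are stacked. -/
theorem starStep (v : V) (a B L : ℕ) (hB : 1 ≤ B) (hBA : B ^ 2 ≤ a) (hL : Nat.log 2 a + 1 ≤ L)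
    (W : ℕ) (hW : 520 * a ≤ W) (Bg : Finset V) (hBg : Bg ⊆ T.ch v) (h : V) (Wc Hb : V → ℕ)
    (hBD : ∀ c ∈ Bg, T.HasD c (Wc c) (Hb c)) (hW1 : ∀ c ∈ Bg, c ≠ h → Wc c + 1 ≤ W)
    (hW2 : h ∈ Bg → Wc h ≤ W) (hsm : ∀ c ∈ T.ch v, c ∉ Bg → T.sz c ≤ a) (N : ℕ)
    (hN : ∑ c ∈ T.ch v, T.sz c ≤ N + ∑ c ∈ Bg, T.sz c) :
    ∃ H, T.HasD v W H ∧
      H * B ≤ 1041 * L ^ 2 * (N + B ^ 2) + ∑ c ∈ Bg, (Hb c + 1) * B := by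
  classical
  set Ti := (T.ch v).filter fun c => c ∉ Bg ∧ T.sz c ≤ B with hTi
  have hTim : ∀ c, c ∈ Ti ↔ c ∈ T.ch v ∧ c ∉ Bg ∧ T.sz c ≤ B := fun c => by simp [hTi]
  have hBa : B ≤ a := (Nat.le_self_pow (by norm_num) B).trans hBA
  have hlogB : Nat.log 2 B + 1 ≤ L := (Nat.succ_le_succ (Nat.log_mono_right hBa)).trans hL
  obtain ⟨p, q, Dp, f1, f2, f3, f4, f5⟩ := fan Ti T.sz a B L hB hBA hlogB
    (fun t ht => ⟨T.sz_pos t, ((hTim t).1 ht).2.2⟩)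
  set Md := (T.ch v).filter fun c => c ∉ Bg ∧ B < T.sz c with hMd
  have hMdm : ∀ c, c ∈ Md ↔ c ∈ T.ch v ∧ c ∉ Bg ∧ B < T.sz c := fun c => by simp [hMd]
  have hdj : Disjoint Bg Md := by
    rw [Finset.disjoint_left]
    intro c h1 h2
    exact ((hMdm c).1 h2).2.1 h1
  have hdj2 : Disjoint (Bg ∪ Md) Ti := by
    rw [Finset.disjoint_left]
    intro c h1 h2
    have h2 := (hTim c).1 h2
    rcases Finset.mem_union.1 h1 with h1 | h1
    · exact h2.2.1 h1
    · have := ((hMdm c).1 h1).2.2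
      omega
  have hun : (Bg ∪ Md) ∪ Ti = T.ch v := by
    ext c
    simp only [Finset.mem_union, hTim, hMdm]
    constructor
    · rintro ((h1 | h1) | h1)
      · exact hBg h1
      · exact h1.1
      · exact h1.1
    · intro h1
      by_cases h2 : c ∈ Bg
      · exact Or.inl (Or.inl h2)
      · rcases le_or_gt (T.sz c) B with h3 | h3
        · exact Or.inr ⟨h1, h2, h3⟩
        · exact Or.inl (Or.inr ⟨h1, h2, h3⟩)
  have hsum : ∑ c ∈ T.ch v, T.sz c = ∑ c ∈ Bg, T.sz c + ∑ c ∈ Md, T.sz c + ∑ c ∈ Ti, T.sz c := by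
    rw [← hun, Finset.sum_union hdj2, Finset.sum_union hdj]
  let Wc' : V → ℕ := fun c => if c ∈ Bg then Wc c else T.sz c - 1
  let Hc' : V → ℕ := fun c => if c ∈ Bg then Hb c else Nat.log 2 (T.sz c)
  have hMW : ∀ c ∈ Md, T.sz c ≤ W := by
    intro c hc
    have h1 := (hMdm c).1 hc
    have := hsm c h1.1 h1.2.1
    omega
  have hst := T.star v Ti (Finset.filter_subset _ _) W Dp T.sz p q
    (fun c _ => ⟨T.sz_pos c, by
      obtain ⟨f, g1, g2, g3, g4⟩ := T.small c
      refine ⟨f, g1, g2, fun u hu => ?_, g4⟩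
      obtain ⟨k1, k2, k3, k4⟩ := g3 u hu
      refine ⟨k1, k2, k3, k4.trans ?_⟩
      have := Nat.log_lt_self 2 (T.sz_pos c).ne'
      have : Nat.log 2 (T.sz c) ≤ T.sz c - 1 := by omega
      exact_mod_cast this⟩)
    f1 f2 (fun c hc => ⟨(f3 c hc).1.trans hW, (f3 c hc).2⟩) f4 (Bg ∪ Md)
    (by
      intro c
      rw [← hun]
      constructor
      · intro h1
        exact ⟨Finset.mem_union_left _ h1, Finset.disjoint_left.1 hdj2 h1⟩
      · rintro ⟨h1, h2⟩
        exact (Finset.mem_union.1 h1).resolve_right h2)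
    Wc' Hc' h
    (by
      intro c hc
      by_cases h1 : c ∈ Bg
      · simp only [Wc', Hc', h1, if_true]
        exact hBD c h1
      · simp only [Wc', Hc', h1, if_false]
        exact (T.small c).hasD)
    (by
      intro c hc hne
      by_cases h1 : c ∈ Bg
      · simp only [Wc', h1, if_true]
        exact hW1 c h1 hne
      · simp only [Wc', h1, if_false]
        have := hMW c ((Finset.mem_union.1 hc).resolve_left h1)
        have := T.sz_pos c
        omega)
    (by
      intro hc
      by_cases h1 : h ∈ Bg
      · simp only [Wc', h1, if_true]
        exact hW2 h1
      · simp only [Wc', h1, if_false]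
        have := hMW h ((Finset.mem_union.1 hc).resolve_left h1)
        omega)
  refine ⟨_, hst, ?_⟩
  rw [Finset.sum_union hdj, add_mul, add_mul, Finset.sum_mul, Finset.sum_mul]
  have e1 : ∑ c ∈ Bg, (Hc' c + 1) * B = ∑ c ∈ Bg, (Hb c + 1) * B :=
    Finset.sum_congr rfl fun c hc => by simp only [Hc', hc, if_true]
  have e2 : ∑ c ∈ Md, (Hc' c + 1) * B ≤ ∑ c ∈ Md, L * T.sz c := by
    apply Finset.sum_le_sum
    intro c hc
    have h1 := (hMdm c).1 hc
    simp only [Hc', h1.2.1, if_false]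
    have h2 := hsm c h1.1 h1.2.1
    have h3 := Nat.log_mono_right (b := 2) h2
    exact Nat.mul_le_mul (by omega) h1.2.2.le
  rw [← Finset.mul_sum] at e2
  rw [e1]
  have hL1 : 1 ≤ L := by omega
  have hLL : L ≤ L ^ 2 := Nat.le_self_pow (by norm_num) L
  set m1 := ∑ c ∈ Md, T.sz c
  set m2 := ∑ c ∈ Ti, T.sz c
  have k1 : m2 ≤ N := by omega
  have k2 : m1 ≤ N := by omega
  have k3 : L * m1 ≤ L ^ 2 * (N + B ^ 2) := Nat.mul_le_mul hLL (by omega)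
  have k4 : 1040 * L ^ 2 * (m2 + B ^ 2) ≤ 1040 * L ^ 2 * (N + B ^ 2) := by gcongr
  nlinarith

end RTree
namespace RTree
set_option linter.unusedSectionVars false
variable {V : Type} [Fintype V] (T : RTree V)

/-! ### Extending a drawing upwards along the heavy path -/

open Classical in
lemma hang_card {v : V} {P : Finset V} (hv : v ∈ P)
    (hP : ∀ q ∈ P, q ≠ v → T.par q ∈ P ∧ q ≠ T.root) (S : Finset V)
    (hS : ∀ c ∈ S, T.Hang (P : Set V) c) : P.card + ∑ c ∈ S, T.sz c ≤ T.sz v := by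
  have hv' : v ∈ (P : Set V) := hv
  have h1 : (S.biUnion T.D).card = ∑ c ∈ S, T.sz c := by
    rw [Finset.card_biUnion]
    · rfl
    · intro c hc d hd hne
      rw [Function.onFun, Finset.disjoint_left]
      intro u h1 h2
      exact hne (T.hang_unique hv' hP (hS c hc) (hS d hd) h1 h2)
  rw [← h1, ← Finset.card_union_of_disjoint]
  · apply Finset.card_le_card
    intro u hu
    rcases Finset.mem_union.1 hu with hu | hu
    · exact T.subset_D hP (P := (P : Set V)) hu
    · obtain ⟨c, hc, huc⟩ := Finset.mem_biUnion.1 hu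
      exact T.D_trans huc (T.hang_mem_D hP (hS c hc))
  · rw [Finset.disjoint_left]
    intro u hu h2
    obtain ⟨c, hc, huc⟩ := Finset.mem_biUnion.1 h2
    exact T.not_mem_P_of_hang hv' hP (hS c hc) huc hu

/-- Along a path `sp 0, …, sp (k + 1)` of length at least two that loses at most `a` vertices, a drawing
of the subtree at its end extends upwards using `O(log a)` further rows: the path `sp 0, …, sp k`
occupies the top row, with `sp k` far to the right, the other subtrees stand side by side below it,
and the long edge from `sp k` back to the left margin passes below them. -/
theorem group (sp : ℕ → V) (k a L : ℕ) (hk : 1 ≤ k)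
    (hsp : ∀ i ≤ k, sp (i + 1) ∈ T.ch (sp i)) (ha : T.sz (sp 0) ≤ T.sz (sp (k + 1)) + a)
    (hL : Nat.log 2 a + 1 ≤ L) (W Hw : ℕ) (hW : 2 * a ≤ W) (hD : T.HasD (sp (k + 1)) W Hw) :
    T.HasD (sp 0) W (Hw + (2 * L + 1)) := by
  classical
  set v := sp 0 with hv0
  set w := sp (k + 1) with hw
  have hpar : ∀ i ≤ k, T.par (sp (i + 1)) = sp i := fun i hi => (T.mem_ch.1 (hsp i hi)).2
  have hroot : ∀ i ≤ k, sp (i + 1) ≠ T.root := fun i hi => (T.mem_ch.1 (hsp i hi)).1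
  have hdep : ∀ j, j ≤ k + 1 → ∀ i < j, T.dep (sp i) < T.dep (sp j) := by
    intro j
    induction j with
    | zero => intro _ i hi; omega
    | succ j ih =>
      intro hj i hi
      have h1 := T.dep_lt _ (hroot j (by omega))
      rw [hpar j (by omega)] at h1
      rcases Nat.lt_succ_iff_lt_or_eq.1 hi with h | h
      · exact (ih (by omega) i h).trans h1
      · rw [h]; exact h1
  have hinj : ∀ i ≤ k + 1, ∀ j ≤ k + 1, sp i = sp j → i = j := by
    intro i hi j hj h
    rcases lt_trichotomy i j with h1 | h1 | h1
    · have := hdep j hj i h1; rw [h] at this; omega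
    · exact h1
    · have := hdep i hi j h1; rw [h] at this; omega
  set P : Finset V := (Finset.range (k + 1)).image sp with hPdef
  have hPm : ∀ q, q ∈ P ↔ ∃ i ≤ k, sp i = q := by
    intro q; simp only [hPdef, Finset.mem_image, Finset.mem_range, Nat.lt_succ_iff]
  have hspP : ∀ i ≤ k, sp i ∈ P := fun i hi => (hPm _).2 ⟨i, hi, rfl⟩
  have hvP : v ∈ P := hspP 0 (by omega)
  have hP : ∀ q ∈ P, q ≠ v → T.par q ∈ P ∧ q ≠ T.root := by
    intro q hq hne
    obtain ⟨i, hi, rfl⟩ := (hPm q).1 hq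
    cases i with
    | zero => exact absurd rfl hne
    | succ i =>
      rw [hpar i (by omega)]
      exact ⟨hspP i (by omega), hroot i (by omega)⟩
  have hwP : w ∉ P := by
    intro h
    obtain ⟨i, hi, h2⟩ := (hPm w).1 h
    have := hinj i (by omega) (k + 1) le_rfl h2
    omega
  have hwH : T.Hang (P : Set V) w := ⟨hroot k le_rfl, hwP, by rw [hpar k le_rfl]; exact hspP k le_rfl⟩
  have hPcard : P.card = k + 1 := by
    rw [hPdef, Finset.card_image_of_injOn, Finset.card_range]
    intro i hi j hj h
    simp only [Finset.coe_range, Set.mem_Iio] at hi hj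
    exact hinj i (by omega) j (by omega) h
  -- the index of a spine vertex
  have hidx : ∃ idx : V → ℕ, ∀ i ≤ k, idx (sp i) = i := by
    refine ⟨fun u => if h : ∃ i ≤ k, sp i = u then h.choose else 0, fun i hi => ?_⟩
    have h : ∃ j ≤ k, sp j = sp i := ⟨i, hi, rfl⟩
    simp only [h, dif_pos]
    exact hinj _ (by have := h.choose_spec.1; omega) _ (by omega) h.choose_spec.2
  obtain ⟨idx, hidx⟩ := hidx
  set Lt : Finset V := Finset.univ.filter fun c => T.Hang (P : Set V) c ∧ c ≠ w with hLt
  have hLtm : ∀ c, c ∈ Lt ↔ T.Hang (P : Set V) c ∧ c ≠ w := fun c => by simp [hLt]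
  have hsum : ∑ c ∈ Lt, T.sz c + (k + 1) ≤ a := by
    have h1 := T.hang_card hvP hP (insert w Lt) (by
      intro c hc
      rcases Finset.mem_insert.1 hc with rfl | hc
      · exact hwH
      · exact ((hLtm c).1 hc).1)
    rw [Finset.sum_insert (by simp [hLtm]), hPcard] at h1
    omega
  obtain ⟨o, ho1, ho2⟩ := exists_packing Lt (fun c => idx (T.par c)) T.sz
  have hoa : ∀ c ∈ Lt, o c + T.sz c + 1 ≤ a := fun c hc => by have := ho1 c hc; omega
  have hlog : ∀ c ∈ Lt, 1 + Nat.log 2 (T.sz c) ≤ L := by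
    intro c hc
    have := Nat.log_mono_right (b := 2) (show T.sz c ≤ a by have := hoa c hc; omega)
    omega
  have hsep : ∀ c ∈ Lt, ∀ d ∈ Lt, c ≠ d → o c + T.sz c ≤ o d ∨ o d + T.sz d ≤ o c := by
    intro c hc d hd hne
    exact (ho2 c hc d hd hne).imp And.left And.left
  set X : ℕ → ℕ := fun i => if i < k then i else 2 * a with hX
  have hXmono : ∀ i j, i ≤ j → j ≤ k → X i ≤ X j := by
    intro i j hij hj
    simp only [hX]
    split_ifs <;> omega
  have hXlt : ∀ i j, i < j → j ≤ k → X i < X j := by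
    intro i j hij hj
    simp only [hX]
    split_ifs <;> omega
  have hX0 : X 0 = 0 := by simp only [hX]; rw [if_pos (by omega)]
  have hXk : X k = 2 * a := by simp [hX]
  have hXM : ∀ i ≤ k, X i ≤ 2 * a := fun i hi => hXk ▸ hXmono i k hi le_rfl
  set g : V → ℝ × ℝ := fun u => if u ∈ P then ((X (idx u) : ℝ), 0) else
    if u = w then (0, 2 * (L : ℝ) + 1) else ((o u : ℝ), 1) with hg
  have hgP : ∀ i ≤ k, g (sp i) = ((X i : ℝ), 0) := by
    intro i hi
    simp only [hg, hspP i hi, if_true, hidx i hi]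
  have hgw : g w = (0, 2 * (L : ℝ) + 1) := by simp only [hg, hwP, if_true, if_false]
  have hgL : ∀ c ∈ Lt, g c = ((o c : ℝ), 1) := by
    intro c hc
    have h1 := (hLtm c).1 hc
    have h2 : c ∉ P := h1.1.2.1
    simp only [hg, h2, h1.2, if_false]
  have hL1 : (1 : ℝ) ≤ L := by
    have : 1 ≤ L := by omega
    exact_mod_cast this
  have ha1 : (1 : ℝ) ≤ a := by
    have : 1 ≤ a := by omega
    exact_mod_cast this
  have hcase : ∀ c, T.Hang (P : Set V) c → c = w ∨ c ∈ Lt := by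
    intro c hc
    by_cases h : c = w
    · exact Or.inl h
    · exact Or.inr ((hLtm c).2 ⟨hc, h⟩)
  -- descriptions of the skeleton edges
  have harcP : ∀ i ≤ k, ∀ z ∈ T.arc v g (sp i), z.2 = 0 ∧ z.1 ≤ X i ∧ ∀ j < i, (X j : ℝ) < z.1 := by
    intro i hi z hz
    unfold arc at hz
    cases i with
    | zero =>
      rw [← hv0, T.src_self, A_self, Set.mem_singleton_iff, hv0, hgP 0 (by omega)] at hz
      subst hz
      exact ⟨rfl, le_rfl, fun j hj => by omega⟩
    | succ i =>
      have hne : sp (i + 1) ≠ v := by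
        intro h
        have := hinj (i + 1) (by omega) 0 (by omega) h
        omega
      rw [T.src_ne hne, hpar i (by omega), hgP i (by omega), hgP (i + 1) hi] at hz
      obtain ⟨t, t0, t1, e1, e2⟩ := hz
      simp only at e1 e2
      have h1 : (X i : ℝ) < X (i + 1) := by exact_mod_cast hXlt i (i + 1) (by omega) hi
      refine ⟨by rw [e2]; ring, by nlinarith, fun j hj => ?_⟩
      have h2 : (X j : ℝ) ≤ X i := by exact_mod_cast hXmono j i (by omega) (by omega)
      nlinarith
  have harcL : ∀ c ∈ Lt, ∃ i ≤ k, idx (T.par c) = i ∧ T.par c = sp i ∧ ∀ z ∈ T.arc v g c,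
      0 < z.2 ∧ z.2 ≤ 1 ∧ z.1 = X i * (1 - z.2) + o c * z.2 := by
    intro c hc
    have h1 := (hLtm c).1 hc
    obtain ⟨i, hi, h2⟩ := (hPm _).1 h1.1.2.2
    refine ⟨i, hi, by rw [← h2, hidx i hi], h2.symm, fun z hz => ?_⟩
    have hne : c ≠ v := fun h => h1.1.2.1 (h ▸ hvP)
    unfold arc at hz
    rw [T.src_ne hne, ← h2, hgP i hi, hgL c hc] at hz
    obtain ⟨t, t0, t1, e1, e2⟩ := hz
    simp only at e1 e2
    refine ⟨by linarith, by linarith, ?_⟩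
    rw [e1, e2]
    ring
  have harcw : ∀ z ∈ T.arc v g w, 0 < z.2 ∧ z.2 ≤ 2 * L + 1 ∧
      (2 * L + 1) * z.1 = 2 * a * (2 * L + 1 - z.2) := by
    intro z hz
    have hne : w ≠ v := fun h => hwP (h ▸ hvP)
    unfold arc at hz
    rw [T.src_ne hne, hpar k le_rfl, hgP k le_rfl, hgw, hXk] at hz
    obtain ⟨t, t0, t1, e1, e2⟩ := hz
    simp only at e1 e2
    push_cast at e1
    refine ⟨by rw [e2]; nlinarith, by rw [e2]; nlinarith, ?_⟩
    rw [e1, e2]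
    ring
  have dPP : ∀ i ≤ k, ∀ j ≤ k, i < j → ∀ z, z ∈ T.arc v g (sp i) → z ∈ T.arc v g (sp j) → False := by
    intro i hi j hj hij z h1 h2
    have := (harcP i hi z h1).2.1
    have := (harcP j hj z h2).2.2 i hij
    linarith
  have dPL : ∀ i ≤ k, ∀ c, T.Hang (P : Set V) c → ∀ z, z ∈ T.arc v g (sp i) → z ∈ T.arc v g c →
      False := by
    intro i hi c hc z h1 h2
    have e := (harcP i hi z h1).1
    rcases hcase c hc with rfl | hc
    · have := (harcw z h2).1
      linarith
    · obtain ⟨j, _, _, _, h3⟩ := harcL c hc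
      have := (h3 z h2).1
      linarith
  have dLL : ∀ c ∈ Lt, ∀ d ∈ Lt, o c + T.sz c ≤ o d → idx (T.par c) ≤ idx (T.par d) →
      ∀ z, z ∈ T.arc v g c → z ∈ T.arc v g d → False := by
    intro c hc d hd h1 h2 z hz hz'
    obtain ⟨i, hi, ei, _, hi2⟩ := harcL c hc
    obtain ⟨j, hj, ej, _, hj2⟩ := harcL d hd
    obtain ⟨a1, a2, a3⟩ := hi2 z hz
    obtain ⟨b1, b2, b3⟩ := hj2 z hz'
    have := T.sz_pos c
    have h3 : (o c : ℝ) < o d := by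
      have : o c < o d := by omega
      exact_mod_cast this
    have h4 : (X i : ℝ) ≤ X j := by
      exact_mod_cast hXmono i j (by omega) hj
    have h5 := mul_le_mul_of_nonneg_right h4 (by linarith : 0 ≤ 1 - z.2)
    have h6 := mul_lt_mul_of_pos_right h3 a1
    linarith
  have dLw : ∀ c ∈ Lt, ∀ z, z ∈ T.arc v g c → z ∈ T.arc v g w → False := by
    intro c hc z hz hz'
    obtain ⟨i, hi, _, _, hi2⟩ := harcL c hc
    obtain ⟨a1, a2, a3⟩ := hi2 z hz
    obtain ⟨b1, b2, b3⟩ := harcw z hz'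
    have h1 : (X i : ℝ) ≤ 2 * a := by exact_mod_cast hXM i hi
    have h2 : (o c : ℝ) ≤ a := by
      have := hoa c hc
      have : o c ≤ a := by omega
      exact_mod_cast this
    have h3 := mul_le_mul_of_nonneg_right h1 (by linarith : 0 ≤ 1 - z.2)
    have h4 := mul_le_mul_of_nonneg_right h2 a1.le
    have h5 : z.1 ≤ 2 * a - a * z.2 := by linarith
    have h6 : (2 * L + 1) * z.1 ≤ (2 * L + 1) * (2 * a - a * z.2) :=
      mul_le_mul_of_nonneg_left h5 (by linarith)
    have h7 : 0 < (a : ℝ) * z.2 := by positivity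
    have h8 : (a : ℝ) * z.2 ≤ a * z.2 * L := le_mul_of_one_le_right h7.le hL1
    linarith
  obtain ⟨k0, hk1, hk2, hk3⟩ := hD
  have hsmall : ∀ c, T.HasD c (T.sz c - 1) (Nat.log 2 (T.sz c)) := fun c => (T.small c).hasD
  choose f0 hf1 hf2 hf3 using hsmall
  let f : V → V → ℝ × ℝ := fun c u => if c = w then
    (((0 : ℤ) : ℝ) + (k0 u).1, ((2 * L + 1 : ℤ) : ℝ) + (k0 u).2) else
    (((o c : ℤ) : ℝ) + (f0 c u).1, ((1 : ℤ) : ℝ) + (f0 c u).2)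
  have hfw : ∀ u, f w u = (((0 : ℤ) : ℝ) + (k0 u).1, ((2 * L + 1 : ℤ) : ℝ) + (k0 u).2) :=
    fun u => by simp only [f, if_true]
  have hfL : ∀ c ∈ Lt, ∀ u, f c u = (((o c : ℤ) : ℝ) + (f0 c u).1, ((1 : ℤ) : ℝ) + (f0 c u).2) :=
    fun c hc u => by simp only [f, ((hLtm c).1 hc).2, if_false]
  let R : V → Set (ℝ × ℝ) := fun c => if c = w then Box 0 W (2 * L + 1) (2 * L + 1 + Hw) else
    Box (o c) (o c + (T.sz c - 1 : ℕ)) 1 (1 + Nat.log 2 (T.sz c))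
  have hRw : R w = Box 0 W (2 * L + 1) (2 * L + 1 + Hw) := by simp [R]
  have hRL : ∀ c ∈ Lt, R c = Box (o c) (o c + (T.sz c - 1 : ℕ)) 1 (1 + Nat.log 2 (T.sz c)) :=
    fun c hc => by simp [R, ((hLtm c).1 hc).2]
  have hmem : ∀ c, T.Hang (P : Set V) c → ∀ u ∈ T.D c, f c u ∈ R c := by
    intro c hc u hu
    rcases hcase c hc with rfl | hc
    · rw [hfw, hRw]
      obtain ⟨a1, a2, a3, a4⟩ := hk3 u hu
      simp only [Box, Set.mem_ofPred_eq]
      push_cast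
      refine ⟨?_, ?_, ?_, ?_⟩ <;> linarith
    · rw [hfL c hc, hRL c hc]
      obtain ⟨a1, a2, a3, a4⟩ := hf3 c u hu
      simp only [Box, Set.mem_ofPred_eq]
      push_cast
      refine ⟨?_, ?_, ?_, ?_⟩ <;> linarith
  have hLR : ∀ c ∈ Lt, ∀ z ∈ R c, (o c : ℝ) ≤ z.1 ∧ z.1 ≤ o c + (T.sz c - 1 : ℕ) ∧ 1 ≤ z.2 ∧
      z.2 ≤ L ∧ z.1 ≤ a := by
    intro c hc z hz
    rw [hRL c hc] at hz
    obtain ⟨a1, a2, a3, a4⟩ := hz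
    have h1 : 1 + (Nat.log 2 (T.sz c) : ℝ) ≤ L := by exact_mod_cast hlog c hc
    have h2 : o c + (T.sz c - 1) ≤ a := by have := hoa c hc; omega
    have h3 : (o c : ℝ) + (T.sz c - 1 : ℕ) ≤ a := by exact_mod_cast h2
    exact ⟨a1, a2, a3, by linarith, by linarith⟩
  obtain ⟨F, F1, F2, F3⟩ := T.glue (v := v) (P := (P : Set V)) hvP hP g f R
    (by
      intro c hc
      rcases hcase c hc with rfl | hc
      · rw [hRw]; exact convex_Box _ _ _ _
      · rw [hRL c hc]; exact convex_Box _ _ _ _)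
    hmem
    (by
      intro c hc
      rcases hcase c hc with rfl | hc
      · rw [funext hfw]
        exact_mod_cast hk1.translate 0 (2 * L + 1)
      · rw [funext (hfL c hc)]
        exact (hf1 c).translate _ _)
    (by
      intro c hc
      rcases hcase c hc with rfl | hc
      · rw [hfw, hgw, hk2]; simp
      · rw [hfL c hc, hgL c hc, hf2]; simp)
    (by
      have aux : ∀ c ∈ Lt, Disjoint (R c) (R w) := by
        intro c hc
        rw [Set.disjoint_left]
        intro z h1 h2
        have h3 := (hLR c hc z h1).2.2.2.1
        rw [hRw] at h2
        have := h2.2.2.1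
        linarith
      intro c hc d hd hne
      rcases hcase c hc with h1 | h1 <;> rcases hcase d hd with h2 | h2
      · exact absurd (h1.trans h2.symm) hne
      · rw [h1]; exact (aux d h2).symm
      · rw [h2]; exact aux c h1
      · rw [Set.disjoint_left]
        intro z hz hz'
        obtain ⟨a1, a2, a3, a4⟩ := hLR c h1 z hz
        obtain ⟨b1, b2, b3, b4⟩ := hLR d h2 z hz'
        have := T.sz_pos c
        have := T.sz_pos d
        rcases hsep c h1 d h2 hne with h | h
        · have : o c + (T.sz c - 1) < o d := by omega
          have : (o c : ℝ) + (T.sz c - 1 : ℕ) < o d := by exact_mod_cast this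
          linarith
        · have : o d + (T.sz d - 1) < o c := by omega
          have : (o d : ℝ) + (T.sz d - 1 : ℕ) < o c := by exact_mod_cast this
          linarith)
    (by
      intro q hq q' hq' hne
      rw [Set.disjoint_left]
      intro z hz hz'
      rcases hq with hq | hq <;> rcases hq' with hq' | hq'
      · obtain ⟨i, hi, rfl⟩ := (hPm q).1 hq
        obtain ⟨j, hj, rfl⟩ := (hPm q').1 hq'
        rcases lt_trichotomy i j with h | h | h
        · exact dPP i hi j hj h z hz hz'
        · exact hne (by rw [h])
        · exact dPP j hj i hi h z hz' hz
      · obtain ⟨i, hi, rfl⟩ := (hPm q).1 hq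
        exact dPL i hi q' hq' z hz hz'
      · obtain ⟨i, hi, rfl⟩ := (hPm q').1 hq'
        exact dPL i hi q hq z hz' hz
      · rcases hcase q hq with h1 | h1 <;> rcases hcase q' hq' with h2 | h2
        · exact hne (h1.trans h2.symm)
        · rw [h1] at hz
          exact dLw q' h2 z hz' hz
        · rw [h2] at hz'
          exact dLw q h1 z hz hz'
        · rcases ho2 q h1 q' h2 hne with ⟨h3, h4⟩ | ⟨h3, h4⟩
          · exact dLL q h1 q' h2 h3 h4 z hz hz'
          · exact dLL q' h2 q h1 h3 h4 z hz' hz)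
    (by
      intro q hq c hc z hz hzR
      rcases hcase c hc with h1 | h1
      · rw [h1, hRw] at hzR
        obtain ⟨b1, b2, b3, b4⟩ := hzR
        rcases hq with hq | hq
        · obtain ⟨i, hi, rfl⟩ := (hPm q).1 hq
          have := (harcP i hi z hz).1
          exfalso; linarith
        · rcases hcase q hq with h2 | h2
          · rw [h2] at hz
            obtain ⟨c1, c2, c3⟩ := harcw z hz
            refine ⟨h2.trans h1.symm, ?_⟩
            have e : z.2 = 2 * L + 1 := by linarith
            rw [h1, hgw]
            refine Prod.ext ?_ e
            rw [e] at c3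
            simp only [sub_self, mul_zero, mul_eq_zero] at c3
            rcases c3 with c3 | c3
            · exfalso; linarith
            · exact c3
          · obtain ⟨i, _, _, _, h3⟩ := harcL q h2
            have := (h3 z hz).2.1
            exfalso; linarith
      · obtain ⟨b1, b2, b3, b4, b5⟩ := hLR c h1 z hzR
        rcases hq with hq | hq
        · obtain ⟨i, hi, rfl⟩ := (hPm q).1 hq
          have := (harcP i hi z hz).1
          exfalso; linarith
        · rcases hcase q hq with h2 | h2
          · exfalso
            rw [h2] at hz
            obtain ⟨c1, c2, c3⟩ := harcw z hz
            have k1 : (2 * L + 1) * z.1 ≤ (2 * L + 1) * (a : ℝ) :=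
              mul_le_mul_of_nonneg_left b5 (by linarith)
            have k2 : (a : ℝ) * z.2 ≤ a * L := mul_le_mul_of_nonneg_left b4 (by linarith)
            linarith
          · obtain ⟨i, _, _, _, h3⟩ := harcL q h2
            obtain ⟨c1, c2, c3⟩ := h3 z hz
            have e : z.2 = 1 := by linarith
            rw [e] at c3
            have e1 : z.1 = o q := by linarith
            have hqc : q = c := by
              by_contra hne
              have := T.sz_pos c
              have := T.sz_pos q
              rw [e1] at b1 b2
              have b1' : o c ≤ o q := by exact_mod_cast b1
              have b2' : o q ≤ o c + (T.sz c - 1) := by exact_mod_cast b2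
              rcases hsep q h2 c h1 hne with h | h <;> omega
            refine ⟨hqc, ?_⟩
            rw [← hqc, hgL q h2]
            exact Prod.ext e1 e)
    (by
      intro q hq
      obtain ⟨i, hi, rfl⟩ := (hPm q).1 hq
      exact ⟨X i, 0, by rw [hgP i hi]; simp⟩)
    (by
      intro q hq hne
      have h1 : ∀ q ∈ P, (g q).2 = 0 := by
        intro q hq
        obtain ⟨i, hi, rfl⟩ := (hPm q).1 hq
        rw [hgP i hi]
      rcases hq with hq | hq
      · rw [h1 q hq, h1 _ (hP q hq hne).1]
      · rw [h1 _ hq.2.2]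
        rcases hcase q hq with rfl | h2
        · rw [hgw]
          simp only
          linarith
        · rw [hgL q h2]
          norm_num)
  have ha2 : 2 * (a : ℝ) ≤ W := by exact_mod_cast hW
  refine ⟨F, F1, ?_, ?_⟩
  · rw [F2 v hvP, hv0, hgP 0 (by omega), hX0]
    simp
  · intro u hu
    push_cast
    by_cases huP : u ∈ P
    · rw [F2 u huP]
      obtain ⟨i, hi, rfl⟩ := (hPm u).1 huP
      rw [hgP i hi]
      have h1 : (X i : ℝ) ≤ 2 * a := by exact_mod_cast hXM i hi
      exact ⟨by positivity, by simp only; linarith, le_rfl, by positivity⟩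
    · obtain ⟨c, hc, huc⟩ := T.exists_hang (P := (P : Set V)) hvP hu huP
      rw [F3 c hc u huc]
      have h1 := hmem c hc u huc
      have h0 : (0 : ℝ) ≤ Hw := by positivity
      rcases hcase c hc with rfl | hc
      · rw [hRw] at h1
        obtain ⟨b1, b2, b3, b4⟩ := h1
        exact ⟨b1, b2, by linarith, by linarith⟩
      · obtain ⟨b1, b2, b3, b4, b5⟩ := hLR c hc _ h1
        have : (0 : ℝ) ≤ o c := by positivity
        exact ⟨by linarith, by linarith, by linarith, by linarith⟩

end RTree
namespace RTree
set_option linter.unusedSectionVars false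
variable {V : Type} [Fintype V] (T : RTree V)

/-! ### The recursive construction -/

/-- A drawing of the subtree at a vertex `w` of the heavy path of `v` extends to the subtree at `v`
with the same width and little extra height, provided at most `a` vertices are added. -/
theorem prepend (v : V) (a B L : ℕ) (hB : 1 ≤ B) (hBA : B ^ 2 ≤ a) (hAB : a ≤ 4 * B ^ 2)
    (hL : Nat.log 2 a + 1 ≤ L) (W : ℕ) (hW : 520 * a ≤ W) (j : ℕ)
    (hj : ∀ i < j, (T.ch (T.hv^[i] v)).Nonempty) (hs : T.sz v ≤ T.sz (T.hv^[j] v) + a) (Hw : ℕ)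
    (hD : T.HasD (T.hv^[j] v) W Hw) :
    ∃ H, T.HasD v W H ∧ H * B ≤ Hw * B + 10000 * (L ^ 2 * B ^ 2) := by
  have hL1 : 1 ≤ L := by omega
  have hLL : L ≤ L ^ 2 := Nat.le_self_pow (by norm_num) L
  have hBB : B ≤ B ^ 2 := Nat.le_self_pow (by norm_num) B
  have hL2 : 1 ≤ L ^ 2 := hL1.trans hLL
  have hmem : ∀ i < j, T.hv^[i + 1] v ∈ T.ch (T.hv^[i] v) := fun i hi => by
    rw [Function.iterate_succ_apply']
    exact T.hv_mem (hj i hi)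
  match j, hmem, hs, hD with
  | 0, _, _, hD => exact ⟨Hw, hD, Nat.le_add_right _ _⟩
  | 1, hmem, hs, hD =>
    have hw : T.hv v ∈ T.ch v := hmem 0 (by norm_num)
    obtain ⟨H, h1, h2⟩ := T.starStep v a B L hB hBA hL W hW {T.hv v} (by simpa using hw) (T.hv v)
      (fun _ => W) (fun _ => Hw) (by simpa using hD) (by simp) (by simp)
      (by
        intro c hc hne
        have h3 := T.hv_max hc
        have h4 : T.sz c + T.sz (T.hv v) ≤ ∑ c ∈ T.ch v, T.sz c := by
          classical
          rw [← Finset.sum_pair (by simpa using hne)]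
          apply Finset.sum_le_sum_of_subset
          intro x hx
          simp only [Finset.mem_insert, Finset.mem_singleton] at hx
          rcases hx with rfl | rfl <;> assumption
        have h5 := T.sz_eq v
        have h6 : T.sz v ≤ T.sz (T.hv v) + a := hs
        omega)
      a (by
        have h5 := T.sz_eq v
        have h6 : T.sz v ≤ T.sz (T.hv v) + a := hs
        rw [Finset.sum_singleton]
        omega)
    refine ⟨H, h1, h2.trans ?_⟩
    rw [Finset.sum_singleton]
    have h3 : L ^ 2 * (a + B ^ 2) ≤ L ^ 2 * (5 * B ^ 2) := Nat.mul_le_mul_left _ (by omega)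
    have h4 : B ^ 2 ≤ L ^ 2 * B ^ 2 := Nat.le_mul_of_pos_left _ hL2
    nlinarith
  | k + 2, hmem, hs, hD =>
    have := T.group (fun i => T.hv^[i] v) (k + 1) a L (by omega)
      (fun i hi => hmem i (by omega)) hs hL W Hw (by omega) hD
    refine ⟨_, this, ?_⟩
    have h3 : L * B ≤ L ^ 2 * B ^ 2 := Nat.mul_le_mul hLL hBB
    have h4 : B ≤ L * B := Nat.le_mul_of_pos_left _ hL1
    nlinarith

/-- The first vertex of the heavy path of `v` at which, together with its light subtrees, at least
`a` vertices of the subtree at `v` have been passed, or else the leaf ending the path. At most `a`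
vertices are passed before it. -/
lemma exists_cut (v : V) (a : ℕ) : ∃ k, (∀ i < k, (T.ch (T.hv^[i] v)).Nonempty) ∧
    T.sz v ≤ T.sz (T.hv^[k] v) + a ∧
    ((T.ch (T.hv^[k] v)).Nonempty → T.sz (T.hv (T.hv^[k] v)) + a ≤ T.sz v) := by
  classical
  have hex : ∃ k, (T.ch (T.hv^[k] v)).Nonempty → T.sz (T.hv (T.hv^[k] v)) + a ≤ T.sz v := by
    by_contra! hcon
    have : ∀ k, T.sz (T.hv^[k] v) + k ≤ T.sz v := by
      intro k
      induction k with
      | zero => simp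
      | succ k ih =>
        have := T.sz_ch_lt (T.hv_mem (hcon k).1)
        rw [Function.iterate_succ_apply']
        omega
    have h1 := this (T.sz v)
    have h2 := T.sz_pos (T.hv^[T.sz v] v)
    omega
  have hmin := fun i (hi : i < Nat.find hex) => Nat.find_min hex hi
  refine ⟨Nat.find hex, fun i hi => ?_, ?_, Nat.find_spec hex⟩
  · have := hmin i hi
    push Not at this
    exact this.1
  · rcases hk : Nat.find hex with _ | k
    · simp
    · have := hmin k (by omega)
      push Not at this
      rw [Function.iterate_succ_apply']
      omega

/-- The drawing of a whole subtree. Subtracting `a` on the right hand side is what makes the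
induction work: each large light child contributes this saving. -/
theorem main (a B L : ℕ) (hB : 1 ≤ B) (hBA : B ^ 2 ≤ a) (hAB : a ≤ 4 * B ^ 2)
    (hL : Nat.log 2 a + 1 ≤ L) (v : V) (hv : a ≤ T.sz v) :
    ∃ H, T.HasD v (520 * a + Nat.log 2 (T.sz v)) H ∧
      H * B + 24000 * (L ^ 2 * a) ≤ 48000 * (L ^ 2 * T.sz v) := by
  classical
  induction hn : T.sz v using Nat.strong_induction_on generalizing v with
  | _ n ih =>
  obtain ⟨k, hk1, hk2, hk3⟩ := T.exists_cut v a
  set w := T.hv^[k] v with hw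
  have hBB : B ≤ B ^ 2 := Nat.le_self_pow (by norm_num) B
  have hL2 : 1 ≤ L ^ 2 := Nat.one_le_pow _ _ (by omega)
  have hwv : T.sz w ≤ T.sz v := by
    have : ∀ j ≤ k, T.sz (T.hv^[j] v) ≤ T.sz v := by
      intro j
      induction j with
      | zero => simp
      | succ j ihj =>
        intro hj
        have h1 := ihj (by omega)
        have := T.sz_ch_lt (T.hv_mem (hk1 j (by omega)))
        rw [Function.iterate_succ_apply']
        omega
    exact this k le_rfl
  set Bg := (T.ch w).filter fun c => a ≤ T.sz c with hBg
  have hBgm : ∀ c, c ∈ Bg ↔ c ∈ T.ch w ∧ a ≤ T.sz c := fun c => by simp [hBg]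
  have ih' : ∀ c ∈ Bg, ∃ H, T.HasD c (520 * a + Nat.log 2 (T.sz c)) H ∧
      H * B + 24000 * (L ^ 2 * a) ≤ 48000 * (L ^ 2 * T.sz c) := fun c hc => by
    have h1 := T.sz_ch_lt ((hBgm c).1 hc).1
    exact ih _ (by omega) c ((hBgm c).1 hc).2 rfl
  choose! Hb hH1 hH2 using ih'
  have hsub : ∑ c ∈ Bg, T.sz c ≤ ∑ c ∈ T.ch w, T.sz c :=
    Finset.sum_le_sum_of_subset (Finset.filter_subset _ _)
  obtain ⟨N, hN⟩ := Nat.exists_eq_add_of_le hsub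
  have hszw := T.sz_eq w
  obtain ⟨H1, hD1, hH1'⟩ := T.starStep w a B L hB hBA hL (520 * a + Nat.log 2 n) (by omega) Bg
    (Finset.filter_subset _ _) (T.hv w) (fun c => 520 * a + Nat.log 2 (T.sz c)) Hb hH1
    (by
      intro c hc hne
      have h1 := T.light_le ((hBgm c).1 hc).1 hne
      have h2 : Nat.log 2 (T.sz c * 2) ≤ Nat.log 2 n := Nat.log_mono_right (by omega)
      rw [Nat.log_mul_base (by norm_num) (T.sz_pos c).ne'] at h2
      omega)
    (by
      intro hc
      have h1 := T.sz_ch_lt ((hBgm _).1 hc).1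
      have h2 : Nat.log 2 (T.sz (T.hv w)) ≤ Nat.log 2 n := Nat.log_mono_right (by omega)
      omega)
    (by
      intro c hc hne
      by_contra! h
      exact hne ((hBgm c).2 ⟨hc, h.le⟩))
    N (by omega)
  obtain ⟨H, hD, hH⟩ := T.prepend v a B L hB hBA hAB hL (520 * a + Nat.log 2 n) (by omega) k hk1
    hk2 H1 hD1
  refine ⟨H, hD, ?_⟩
  have hsum : ∑ c ∈ Bg, (Hb c + 1) * B + Bg.card * (24000 * (L ^ 2 * a)) ≤
      48000 * (L ^ 2 * ∑ c ∈ Bg, T.sz c) + Bg.card * B := by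
    rw [Finset.mul_sum, Finset.mul_sum, ← smul_eq_mul (a := Bg.card), ← Finset.sum_const,
      ← smul_eq_mul (a := Bg.card), ← Finset.sum_const, ← Finset.sum_add_distrib,
      ← Finset.sum_add_distrib]
    apply Finset.sum_le_sum
    intro c hc
    have := hH2 c hc
    linarith
  have hLa : B ≤ L ^ 2 * a := (hBB.trans hBA).trans (Nat.le_mul_of_pos_left _ hL2)
  have hLB : L ^ 2 * B ^ 2 ≤ L ^ 2 * a := Nat.mul_le_mul_left _ hBA
  set S := ∑ c ∈ Bg, T.sz c with hS
  have hNS : L ^ 2 * (N + S) ≤ L ^ 2 * n := Nat.mul_le_mul_left _ (by omega)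
  have hna : L ^ 2 * a ≤ L ^ 2 * n := Nat.mul_le_mul_left _ (by omega)
  have hcB : Bg.card * B ≤ Bg.card * (L ^ 2 * a) := Nat.mul_le_mul_left _ hLa
  rw [mul_add] at hNS
  have hN0 : 0 ≤ L ^ 2 * N := Nat.zero_le _
  have hS0 : 0 ≤ L ^ 2 * S := Nat.zero_le _
  rw [mul_assoc, mul_add] at hH1'
  rcases Nat.lt_or_ge 1 Bg.card with hr | hr
  · have : 2 * (L ^ 2 * a) ≤ Bg.card * (L ^ 2 * a) := Nat.mul_le_mul_right _ hr
    linarith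
  rcases Nat.eq_zero_or_pos Bg.card with h0 | h0
  · have hS1 : S = 0 := by rw [hS, Finset.card_eq_zero.1 h0, Finset.sum_empty]
    rw [h0, hS1] at hsum
    rw [h0] at hcB
    linarith
  · have h1 : Bg.card = 1 := by omega
    obtain ⟨c, hc⟩ := Finset.card_eq_one.1 h1
    have hcB' : c ∈ Bg := by simp [hc]
    have hcw := (hBgm c).1 hcB'
    have hmax := T.hv_max hcw.1
    have h2 := hk3 ⟨c, hcw.1⟩
    have h3 : S + a ≤ n := by
      rw [hS, hc, Finset.sum_singleton]
      omega
    have h4 : L ^ 2 * (S + a) ≤ L ^ 2 * n := Nat.mul_le_mul_left _ h3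
    rw [mul_add] at h4
    rw [h1] at hsum hcB
    linarith

end RTree

/-! ### From drawings of parent maps to drawings of trees -/

lemma segment_subset_A (a b : ℝ × ℝ) {z : ℝ × ℝ} (hz : z ∈ segment ℝ a b) : z ∈ A a b ∨ z = a := by
  obtain ⟨s, t, hs, ht, hst, rfl⟩ := hz
  rcases eq_or_ne t 0 with rfl | h0
  · right
    simp_all
  · left
    refine ⟨s, hs, ?_, ?_, ?_⟩
    · have := lt_of_le_of_ne ht h0.symm
      linarith
    · obtain rfl : t = 1 - s := by linarith
      simp
      ring
    · obtain rfl : t = 1 - s := by linarith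
      simp
      ring

namespace RTree
variable {V : Type}

/-- The parent map of a tree with distinguished vertex `r`. -/
lemma exists_of_isTree (G : SimpleGraph V) (hG : G.IsTree) (r : V) : ∃ T : RTree V, T.root = r ∧
    ∀ u v, (G.Adj u v ∧ G.dist r u + 1 = G.dist r v) ↔ (v ≠ r ∧ T.par v = u) := by
  classical
  have hex : ∀ v, v ≠ r → ∃ u, G.Adj u v ∧ G.dist r u + 1 = G.dist r v := by
    intro v hv
    obtain ⟨p, hp⟩ := hG.connected.exists_walk_length_eq_dist r v
    have hnil : ¬ p.Nil := SimpleGraph.Walk.not_nil_of_ne hv.symm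
    have ha := p.adj_penultimate hnil
    refine ⟨p.penultimate, ha, ?_⟩
    have h1 := SimpleGraph.dist_le p.dropLast
    have h2 : p.dropLast.length + 1 = p.length := p.length_dropLast_add_one hnil
    rcases hG.dist_eq_dist_add_one_of_adj r ha with h | h <;> omega
  have hun : ∀ v u u', G.Adj u v → G.dist r u + 1 = G.dist r v → G.Adj u' v →
      G.dist r u' + 1 = G.dist r v → u = u' := by
    intro v u u' h1 h2 h1' h2'
    obtain ⟨p, hp⟩ := hG.connected.exists_walk_length_eq_dist r u
    obtain ⟨p', hp'⟩ := hG.connected.exists_walk_length_eq_dist r u'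
    have hq := (p.concat h1).isPath_of_length_eq_dist (by simp [hp, h2])
    have hq' := (p'.concat h1').isPath_of_length_eq_dist (by simp [hp', h2'])
    have := (hG.existsUnique_path r v).unique hq hq'
    have h3 := congrArg SimpleGraph.Walk.penultimate this
    rwa [SimpleGraph.Walk.penultimate_concat, SimpleGraph.Walk.penultimate_concat] at h3
  choose! P hP1 hP2 using hex
  refine ⟨⟨fun v => if v = r then r else P v, r, G.dist r, by simp, ?_⟩, rfl, ?_⟩
  · intro v hv
    have := hP2 v hv
    simp only [hv, if_false]
    omega
  · intro u v
    constructor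
    · rintro ⟨h1, h2⟩
      have hv : v ≠ r := by
        rintro rfl
        simp at h2
      refine ⟨hv, ?_⟩
      simp only [hv, if_false]
      exact hun v _ _ (hP1 v hv) (hP2 v hv) h1 h2
    · rintro ⟨hv, rfl⟩
      simp only [hv, if_false]
      exact ⟨hP1 v hv, hP2 v hv⟩

variable [Fintype V]

lemma sz_root (T : RTree V) : T.sz T.root = Fintype.card V := by
  have : T.D T.root = Finset.univ := by
    ext u
    simp only [Finset.mem_univ, iff_true]
    induction hn : T.dep u using Nat.strong_induction_on generalizing u with
    | _ n ih =>
      by_cases h : u = T.root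
      · rw [h]
        exact T.self_mem _
      · exact T.mem_D_of_par (ih _ (hn ▸ T.dep_lt u h) _ rfl)
  rw [sz, this, Finset.card_univ]

/-- The arcs contain their lower end and miss their upper end, so a map with pairwise disjoint arcs
is a straight-line drawing. -/
theorem isStraightLineDrawing (T : RTree V) (G : SimpleGraph V)
    (hadj : ∀ u v, G.Adj u v → (v ≠ T.root ∧ T.par v = u) ∨ (u ≠ T.root ∧ T.par u = v))
    (f : V → ℝ × ℝ)
    (hdis : ∀ u u', u ≠ u' → Disjoint (T.arc T.root f u) (T.arc T.root f u')) :
    IsStraightLineDrawing G f := by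
  have hself : ∀ u, f u ∈ T.arc T.root f u := fun u => right_mem_A _ _
  have huniq : ∀ z u u', z ∈ T.arc T.root f u → z ∈ T.arc T.root f u' → u = u' := by
    intro z u u' h1 h2
    by_contra hne
    exact Set.disjoint_left.1 (hdis u u' hne) h1 h2
  have hinj : Function.Injective f := fun u u' h => huniq (f u) u u' (hself u) (h ▸ hself u')
  have hseg : ∀ c, c ≠ T.root → ∀ z ∈ segment ℝ (f (T.par c)) (f c),
      z ∈ T.arc T.root f c ∨ z = f (T.par c) := by
    intro c hc z hz
    have := segment_subset_A _ _ hz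
    rwa [← T.src_ne hc] at this ⊢
  have hor : ∀ u v, G.Adj u v → ∃ c, c ≠ T.root ∧ s(u, v) = s(T.par c, c) ∧
      segment ℝ (f u) (f v) = segment ℝ (f (T.par c)) (f c) ∧
      ∀ w, (w = u ∨ w = v) ↔ (w = T.par c ∨ w = c) := by
    intro u v h
    rcases hadj u v h with ⟨h1, rfl⟩ | ⟨h1, rfl⟩
    · exact ⟨v, h1, rfl, rfl, fun w => Iff.rfl⟩
    · exact ⟨u, h1, Sym2.eq_swap, segment_symm ℝ _ _, fun w => or_comm⟩
  refine ⟨hinj, ?_, ?_⟩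
  · intro u v w huv hu hv hw
    obtain ⟨c, hc, -, h2, h3⟩ := hor u v huv
    have hn : ¬ (w = T.par c ∨ w = c) := by
      rw [← h3]
      tauto
    rw [h2] at hw
    rcases hseg c hc _ hw with h | h
    · exact hn (Or.inr (huniq _ _ _ (hself w) h))
    · exact hn (Or.inl (hinj h))
  · intro u v u' v' huv huv' hne
    obtain ⟨c, hc, h1, h2, h3⟩ := hor u v huv
    obtain ⟨c', hc', h1', h2', h3'⟩ := hor u' v' huv'
    have hcc : c ≠ c' := by
      rintro rfl
      exact hne (h1.trans h1'.symm)
    rw [h2, h2']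
    simp only [h3, h3']
    ext z
    constructor
    · rintro ⟨hz, hz'⟩
      rcases hseg c hc z hz with h | h <;> rcases hseg c' hc' z hz' with h' | h'
      · exact absurd (huniq z _ _ h h') hcc
      · have : c = T.par c' := huniq z _ _ h (h' ▸ hself _)
        exact ⟨c, ⟨Or.inr rfl, Or.inl this⟩, by rw [this, h']⟩
      · have : c' = T.par c := huniq z _ _ h' (h ▸ hself _)
        exact ⟨c', ⟨Or.inl this, Or.inr rfl⟩, by rw [this, h]⟩
      · exact ⟨T.par c, ⟨Or.inl rfl, Or.inl (hinj (h.symm.trans h'))⟩, h.symm⟩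
    · rintro ⟨w, ⟨hw, hw'⟩, rfl⟩
      constructor
      · rcases hw with rfl | rfl
        · exact left_mem_segment _ _ _
        · exact right_mem_segment _ _ _
      · rcases hw' with rfl | rfl
        · exact left_mem_segment _ _ _
        · exact right_mem_segment _ _ _

end RTree

/-- The grid drawing of a tree obtained from a drawing of its parent map, by a reflection turning the
second coordinate upwards and a translation. -/
theorem exists_gridDrawing {V : Type} [Fintype V] (G : SimpleGraph V) (hG : G.IsTree) (r : V)
    (T : RTree V) (hr : T.root = r)
    (hT : ∀ u v, (G.Adj u v ∧ G.dist r u + 1 = G.dist r v) ↔ (v ≠ r ∧ T.par v = u))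
    (W H : ℕ) (hD : T.HasD T.root W H) : ∃ f : V → ℝ × ℝ, IsGridDrawing G f (W + 1) (H + 1) ∧
      IsUpward G r f ∧ f r = (1, ((H + 1 : ℕ) : ℝ)) := by
  obtain ⟨f, hDr, h0, hbd⟩ := hD
  have hmem : ∀ u, u ∈ T.D T.root := by
    intro u
    have h1 : T.D T.root = Finset.univ := Finset.card_eq_iff_eq_univ _ |>.1 T.sz_root
    rw [h1]
    exact Finset.mem_univ u
  refine ⟨fun u => ((f u).1 + 1, (H : ℝ) + 1 - (f u).2), ⟨?_, ?_⟩, ?_, ?_⟩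
  · apply T.isStraightLineDrawing
    · intro u v huv
      rcases hG.dist_eq_dist_add_one_of_adj r huv with h | h
      · right
        rw [hr]
        exact (hT v u).1 ⟨huv.symm, h.symm⟩
      · left
        rw [hr]
        exact (hT u v).1 ⟨huv, h.symm⟩
    · intro u u' hne
      have h1 := hDr.planar u (hmem u) u' (hmem u') hne
      rw [Set.disjoint_left] at h1 ⊢
      intro z hz hz'
      have key : ∀ w, z ∈ T.arc T.root (fun u => ((f u).1 + 1, (H : ℝ) + 1 - (f u).2)) w →
          (z.1 - 1, (H : ℝ) + 1 - z.2) ∈ T.arc T.root f w := by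
        rintro w ⟨t, ht0, ht1, e1, e2⟩
        refine ⟨t, ht0, ht1, ?_, ?_⟩
        · simp only at e1 ⊢
          rw [e1]
          ring
        · simp only at e2 ⊢
          rw [e2]
          ring
      exact h1 (key u hz) (key u' hz')
  · intro u
    obtain ⟨i, j, e⟩ := hDr.int u (hmem u)
    obtain ⟨b1, b2, b3, b4⟩ := hbd u (hmem u)
    simp only [e] at b1 b2 b3 b4 ⊢
    norm_cast at b1 b2 b3 b4
    refine ⟨i + 1, H + 1 - j, by omega, by push_cast; omega, by omega, by push_cast; omega, ?_⟩
    push_cast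
    rfl
  · intro u v huv
    obtain ⟨h1, h2⟩ := (hT u v).1 huv
    have := hDr.up v (hmem v) (by rwa [hr])
    rw [h2] at this
    simp only
    linarith
  · rw [hr] at h0
    simp only [h0]
    push_cast
    simp

end TreeDraw

/-- Theorem 3 (general algorithm): every rooted tree of size `n` has a straight-line upward
grid drawing of width `O(A + log n)` and height `O((n/√A)·log² A)`, with the root at the
top-left corner. -/
theorem stmt6 : ∃ C : ℝ, 0 < C ∧
    ∀ (n A : ℕ), 2 ≤ A → A ≤ n →
    ∀ (V : Type) [Fintype V] (G : SimpleGraph V), G.IsTree → Fintype.card V = n →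
    ∀ r : V,
    ∃ (W H : ℕ) (f : V → ℝ × ℝ), IsGridDrawing G f W H ∧ IsUpward G r f ∧
      (W : ℝ) ≤ C * ((A : ℝ) + Real.logb 2 n) ∧
      (H : ℝ) ≤ C * ((n : ℝ) / Real.sqrt A) * (Real.logb 2 A) ^ 2 ∧
      f r = (1, (H : ℝ)) := by
  refine ⟨384008, by norm_num, ?_⟩
  intro n a ha2 han V _ G hG hn r
  obtain ⟨T, hr, hT⟩ := TreeDraw.RTree.exists_of_isTree G hG r
  set B := Nat.sqrt a with hBdef
  set L := Nat.log 2 a + 1 with hLdef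
  have hB : 1 ≤ B := Nat.sqrt_pos.2 (by omega)
  have hBA : B ^ 2 ≤ a := Nat.sqrt_le' a
  have hAB : a ≤ 4 * B ^ 2 := by
    have : a < (B + 1) ^ 2 := Nat.lt_succ_sqrt' a
    nlinarith
  have hsz : T.sz T.root = n := T.sz_root.trans hn
  obtain ⟨H, hD, hH⟩ := T.main a B L hB hBA hAB le_rfl T.root (by omega)
  rw [hsz] at hD hH
  obtain ⟨f, h1, h2, h3⟩ := TreeDraw.exists_gridDrawing G hG r T hr hT _ _ hD
  refine ⟨_, _, f, h1, h2, ?_, ?_, h3⟩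
  · have h4 : (Nat.log 2 n : ℝ) ≤ Real.logb 2 n := Real.natLog_le_logb n 2
    have h5 : (2 : ℝ) ≤ a := by exact_mod_cast ha2
    have h6 : (0 : ℝ) ≤ Nat.log 2 n := Nat.cast_nonneg _
    push_cast
    linarith
  · have h4 : (Nat.log 2 a : ℝ) ≤ Real.logb 2 a := Real.natLog_le_logb a 2
    have h5 : (1 : ℝ) ≤ Nat.log 2 a := by
      exact_mod_cast Nat.log_pos (by norm_num) ha2
    have hl : (L : ℝ) ≤ 2 * Real.logb 2 a := by
      rw [hLdef]
      push_cast
      linarith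
    have hl2 : (L : ℝ) ^ 2 ≤ (2 * Real.logb 2 a) ^ 2 := pow_le_pow_left₀ (Nat.cast_nonneg _) hl 2
    have hs0 : 0 < Real.sqrt a := Real.sqrt_pos.2 (by exact_mod_cast (by omega : 0 < a))
    have hs : Real.sqrt a ≤ 2 * B := by
      rw [Real.sqrt_le_left (by positivity)]
      have : (a : ℝ) ≤ 4 * (B : ℝ) ^ 2 := by exact_mod_cast hAB
      linarith
    have hHB : (H + 1) * B ≤ 48001 * (L ^ 2 * n) := by
      have hL2 : 1 ≤ L ^ 2 := Nat.one_le_pow _ _ (by omega)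
      have h6 : n ≤ L ^ 2 * n := Nat.le_mul_of_pos_left _ hL2
      have h7 : B ≤ B ^ 2 := Nat.le_self_pow (by norm_num) B
      have h8 : 0 ≤ L ^ 2 * a := Nat.zero_le _
      linarith
    have hHB' : ((H + 1 : ℕ) : ℝ) * B ≤ 48001 * ((L : ℝ) ^ 2 * n) := by exact_mod_cast hHB
    rw [mul_div_assoc', div_mul_eq_mul_div, le_div_iff₀ hs0]
    calc ((H + 1 : ℕ) : ℝ) * Real.sqrt a ≤ ((H + 1 : ℕ) : ℝ) * (2 * B) :=
          mul_le_mul_of_nonneg_left hs (Nat.cast_nonneg _)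
      _ ≤ 96002 * ((L : ℝ) ^ 2 * n) := by linarith
      _ ≤ 96002 * ((2 * Real.logb 2 a) ^ 2 * n) := by gcongr
      _ = 384008 * n * Real.logb 2 a ^ 2 := by ring
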